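/- arXiv:2012.13511 — 3 statements merged into one kernel-verified Lean document; each statement's English description precedes it below -/
import Mathlib

section
/- Let f ∈ S*_car with Taylor expansion f(z) = z + Σ_{n≥2} a_n zⁿ on 𝔻, and let g be analytic on 𝔻 with g(0) = 0, g'(0) = 1, g'(z) ≠ 0 on 𝔻 and Re(1 + z g''(z)/g'(z)) > 0 for all z ∈ 𝔻 (i.e. g is a normalized convex function), with Taylor expansion g(z) = z + Σ_{n≥2} b_n zⁿ. Let f∗g denote the Hadamard product (f∗g)(z) = z + Σ_{n≥2} a_n b_n zⁿ. Then for every 0 < ρ ≤ 1/2 the function z ↦ (f∗g)(ρz)/ρ belongs to S*_car. -/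
open Complex Metric

def omegaCar : Set ℂ := {w : ℂ | ∃ u : ℂ, ‖u‖ < 1 ∧ w = 1 + u + u ^ 2 / 2}

def SCar (f : ℂ → ℂ) : Prop :=
  DifferentiableOn ℂ f (Metric.ball (0 : ℂ) 1) ∧ f 0 = 0 ∧ deriv f 0 = 1 ∧
    (∀ z : ℂ, ‖z‖ < 1 → z ≠ 0 → f z ≠ 0) ∧
    (∀ z : ℂ, ‖z‖ < 1 → z ≠ 0 → z * deriv f z / f z ∈ omegaCar)

/-!
On `|z| < 1/2` the function `f` is starlike of order `1/2`, and so is `g` on the unit disk by the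
Marx–Strohhäcker theorem. Integrating the logarithmic derivative along circles turns this into the
inequality `0 < Re ((ζ / z - 1) * (h z / h ζ))` for `|z| = |ζ|`, `z ≠ ζ`.

Write `z f' = F f` and let `A`, `B`, `F` be the coefficients of `f`, `g`, `F`. Pairing the Cauchy
product `F A` with `B` is pairing `F` with the correlation `q` of `A` and `B`, so
`z (f ∗ g)' / (f ∗ g) = (∑ Fₙ qₙ) / q₀` is the average of `F` on a circle against the kernel
`Re (2 q(w) / q₀ - 1)`. The two-point inequalities for `f` and `g` make a one-parameter family of
such pairings nonvanishing, which forces this kernel to be a positive probability density.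

By Schwarz's lemma `F` maps `|z| ≤ 1/2` into the image of `|u| ≤ 1/2` under `1 + u + u² / 2`. This
image is closed and convex, hence contains the average.
-/

/-- The sum `∑ cₙ zⁿ` of a power series; being a `tsum`, it is `0` where the series diverges. -/
noncomputable def powSum (c : ℕ → ℂ) (z : ℂ) : ℂ := ∑' n, c n * z ^ n

/-- The power series with coefficients `c` converges on the open disk of radius `R` about `0`. -/
def ConvergesOnBall (c : ℕ → ℂ) (R : ℝ) : Prop :=
  ∀ z : ℂ, ‖z‖ < R → Summable fun n => c n * z ^ n

section PowerSeries

variable {c : ℕ → ℂ} {R : ℝ} {z : ℂ}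

lemma powSum_zero (c : ℕ → ℂ) : powSum c 0 = c 0 := by
  rw [powSum, tsum_eq_single 0 fun n hn => by simp [hn], pow_zero, mul_one]

lemma powSum_mul_pow (c : ℕ → ℂ) (v z : ℂ) : powSum (fun n => c n * v ^ n) z = powSum c (v * z) :=
  tsum_congr fun n => by rw [mul_pow, mul_assoc]

lemma powSum_eq_mul_powSum_succ (h0 : c 0 = 0) (z : ℂ) :
    powSum c z = z * powSum (fun n => c (n + 1)) z := by
  have hsupp : (Function.support fun n => c n * z ^ n) ⊆ Set.range Nat.succ := by
    rintro (_ | n) hn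
    · simp [h0] at hn
    · exact ⟨n, rfl⟩
  rw [powSum, ← Nat.succ_injective.tsum_eq hsupp, powSum, ← tsum_mul_left]
  exact tsum_congr fun n => by rw [Nat.succ_eq_add_one, pow_succ]; ring

lemma norm_mul_pow_le_norm (x : ℂ) (hz : ‖z‖ ≤ 1) (n : ℕ) : ‖x * z ^ n‖ ≤ ‖x‖ := by
  rw [norm_mul, norm_pow]
  exact mul_le_of_le_one_right (norm_nonneg _) (pow_le_one₀ (norm_nonneg _) hz)

lemma summable_mul_pow_of_norm_le_one (hc : Summable c) (hz : ‖z‖ ≤ 1) :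
    Summable fun n => c n * z ^ n :=
  hc.norm.of_norm_bounded fun n => norm_mul_pow_le_norm (c n) hz n

lemma continuousOn_powSum (hc : Summable c) : ContinuousOn (powSum c) (closedBall 0 1) :=
  continuousOn_tsum (fun n => by fun_prop) hc.norm
    fun n _ hz => norm_mul_pow_le_norm (c n) (by simpa using hz) n

namespace ConvergesOnBall

-- Divergence at `z` would give `powSum c z` the junk value `0`.
lemma of_powSum_ne_zero (h : ∀ z : ℂ, ‖z‖ < R → z ≠ 0 → powSum c z ≠ 0) :
    ConvergesOnBall c R := by
  intro z hz
  rcases eq_or_ne z 0 with rfl | hz0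
  · exact summable_of_ne_finset_zero (s := {0}) fun n hn => by
      rw [zero_pow (by simpa using hn), mul_zero]
  · by_contra hdiv
    exact h z hz hz0 (tsum_eq_zero_of_not_summable hdiv)

lemma exists_pos_lt_norm_summable (hc : ConvergesOnBall c R) (hz : ‖z‖ < R) :
    ∃ r : ℝ, 0 < r ∧ ‖z‖ < r ∧ Summable fun n => ‖c n‖ * r ^ n := by
  obtain ⟨r, hzr, hrR⟩ := exists_between hz
  have hr : 0 < r := (norm_nonneg z).trans_lt hzr
  have hnorm : ‖(r : ℂ)‖ = r := by simp [hr.le]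
  exact ⟨r, hr, hzr, by simpa [abs_of_pos hr] using (hc r (hnorm.trans_lt hrR)).norm⟩

lemma summable_succ_mul_norm (hc : ConvergesOnBall c R) (hz : ‖z‖ < R) :
    Summable fun n : ℕ => (n + 1 : ℝ) * ‖c n * z ^ n‖ := by
  obtain ⟨r, hr, hzr, hsum⟩ := hc.exists_pos_lt_norm_summable hz
  obtain ⟨C, hC⟩ := hsum.tendsto_atTop_zero.bddAbove_range
  have hratio : ‖‖z‖ / r‖ < 1 := by
    rw [Real.norm_of_nonneg (by positivity)]
    exact (div_lt_one hr).2 hzr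
  have hgeom : Summable fun n : ℕ => (n + 1 : ℝ) * (‖z‖ / r) ^ n := by
    simpa [add_mul] using (summable_pow_mul_geometric_of_norm_lt_one 1 hratio).add
      (summable_geometric_of_norm_lt_one hratio)
  refine .of_nonneg_of_le (fun n => by positivity) (fun n => ?_) (hgeom.mul_left C)
  calc (n + 1 : ℝ) * ‖c n * z ^ n‖ = ‖c n‖ * r ^ n * ((n + 1) * (‖z‖ / r) ^ n) := by
        rw [norm_mul, norm_pow, div_pow]
        field_simp
    _ ≤ C * ((n + 1) * (‖z‖ / r) ^ n) := by
        gcongr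
        exact hC ⟨n, rfl⟩

lemma hasSum_deriv_powSum (hc : ConvergesOnBall c R) (hz : ‖z‖ < R) :
    DifferentiableAt ℂ (powSum c) z ∧
      HasSum (fun n : ℕ => c n * (n * z ^ (n - 1))) (deriv (powSum c) z) := by
  obtain ⟨r, -, hzr, hsum⟩ := hc.exists_pos_lt_norm_summable hz
  have hle : ∀ (n : ℕ), ∀ w ∈ ball (0 : ℂ) r, ‖c n * w ^ n‖ ≤ ‖c n‖ * r ^ n := by
    intro n w hw
    rw [norm_mul, norm_pow]
    gcongr
    exact (mem_ball_zero_iff.1 hw).le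
  have hdiff (n : ℕ) : DifferentiableOn ℂ (fun w : ℂ => c n * w ^ n) (ball 0 r) := by fun_prop
  have hmem : z ∈ ball (0 : ℂ) r := mem_ball_zero_iff.2 hzr
  refine ⟨(differentiableOn_tsum_of_summable_norm hsum hdiff isOpen_ball hle).differentiableAt
    (isOpen_ball.mem_nhds hmem), ?_⟩
  exact (hasSum_deriv_of_summable_norm hsum hdiff isOpen_ball hle hmem).congr_fun fun n => by simp

lemma differentiableOn_powSum (hc : ConvergesOnBall c R) :
    DifferentiableOn ℂ (powSum c) (ball 0 R) := fun _ hz =>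
  (hc.hasSum_deriv_powSum (mem_ball_zero_iff.1 hz)).1.differentiableWithinAt

lemma mul_deriv_powSum (hc : ConvergesOnBall c R) (hz : ‖z‖ < R) :
    z * deriv (powSum c) z = powSum (fun n => n * c n) z := by
  rw [← ((hc.hasSum_deriv_powSum hz).2.mul_left z).tsum_eq]
  refine tsum_congr fun n => ?_
  rcases n with _ | n
  · simp
  · rw [Nat.add_sub_cancel, pow_succ]
    ring

lemma deriv_powSum_zero (hc : ConvergesOnBall c R) (hR : 0 < R) : deriv (powSum c) 0 = c 1 := by
  rw [← (hc.hasSum_deriv_powSum (z := 0) (by simpa using hR)).2.tsum_eq, tsum_eq_single 1]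
  · simp
  · rintro (_ | _ | n) hn
    · simp
    · exact absurd rfl hn
    · simp

end ConvergesOnBall

lemma exists_eqOn_powSum {p : ℂ → ℂ} (hp : DifferentiableOn ℂ p (ball 0 R)) :
    ∃ c : ℕ → ℂ, ConvergesOnBall c R ∧ Set.EqOn p (powSum c) (ball 0 R) := by
  have htaylor : ∀ z ∈ ball (0 : ℂ) R,
      HasSum (fun n : ℕ => (n.factorial : ℂ)⁻¹ * iteratedDeriv n p 0 * z ^ n) (p z) :=
    fun z hz => (hasSum_taylorSeries_on_ball hp hz).congr_fun fun n => by
      simp only [sub_zero, smul_eq_mul]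
      ring
  exact ⟨_, fun z hz => (htaylor z (mem_ball_zero_iff.2 hz)).summable,
    fun z hz => (htaylor z hz).tsum_eq.symm⟩

end PowerSeries

section CircleAverage

open Real (circleAverage circleAverage_congr_sphere circleAverage_const)
open MeasureTheory

variable {E : Type*} [NormedAddCommGroup E] [NormedSpace ℝ E]

lemma circleAverage_zpow (k : ℤ) :
    circleAverage (fun z : ℂ => z ^ k) 0 1 = if k = 0 then 1 else 0 := by
  rcases eq_or_ne k 0 with rfl | hk
  · simpa using circleAverage_const (1 : ℂ) 0 1
  · have hshift : circleAverage (fun z : ℂ => z ^ k) 0 1 =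
        (2 * Real.pi * I)⁻¹ • ∮ z in C(0, 1), (z - 0) ^ (k - 1) := by
      rw [Real.circleAverage_eq_circleIntegral one_ne_zero]
      congr 1
      refine circleIntegral.integral_congr zero_le_one fun z hz => ?_
      rw [sub_zero, smul_eq_mul, zpow_sub_one₀ (ne_of_mem_sphere hz one_ne_zero), mul_comm]
    rw [hshift, circleIntegral.integral_sub_zpow_of_ne (by lia), smul_zero, if_neg hk]

lemma circleAverage_pow_mul_inv_pow (n m : ℕ) :
    circleAverage (fun z : ℂ => z ^ n * z⁻¹ ^ m) 0 1 = if n = m then 1 else 0 := by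
  rw [circleAverage_congr_sphere (f₂ := fun z : ℂ => z ^ ((n : ℤ) - m)), circleAverage_zpow]
  · simp [sub_eq_zero]
  · intro z hz
    simp [zpow_sub₀ (ne_of_mem_sphere hz (by simp)), div_eq_mul_inv]

lemma hasSum_circleAverage [CompleteSpace E] {u : ℕ → ℝ} (hu : Summable u) {f : ℕ → ℂ → E} {c : ℂ}
    {R : ℝ} (hf : ∀ n, ContinuousOn (f n) (sphere c |R|))
    (hle : ∀ n, ∀ z ∈ sphere c |R|, ‖f n z‖ ≤ u n) :
    HasSum (fun n => circleAverage (f n) c R) (circleAverage (fun z => ∑' n, f n z) c R) := by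
  have hmem (θ : ℝ) : circleMap c R θ ∈ sphere c |R| := circleMap_mem_sphere' c R θ
  refine .const_smul _ (intervalIntegral.hasSum_integral_of_dominated_convergence
    (fun n _ => u n) (fun n => ?_) (fun n => .of_forall fun θ _ => hle n _ (hmem θ))
    (.of_forall fun _ _ => hu) intervalIntegrable_const
    (.of_forall fun θ _ => (hu.of_norm_bounded fun n => hle n _ (hmem θ)).hasSum))
  exact ((hf n).comp_continuous (continuous_circleMap c R) hmem).aestronglyMeasurable

lemma circleAverage_pos {f : ℂ → ℝ} {c : ℂ} {R : ℝ} (hR : R ≠ 0)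
    (hf : ContinuousOn f (sphere c |R|)) {S : Set ℂ} (hS : S.Countable)
    (hpos : ∀ z ∈ sphere c |R| \ S, 0 < f z) : 0 < circleAverage f c R := by
  have hmem (θ : ℝ) : circleMap c R θ ∈ sphere c |R| := circleMap_mem_sphere' c R θ
  have hcountable : (circleMap c R ⁻¹' S).Countable := hS.preimage_circleMap c hR
  have hae : ∀ᵐ θ : ℝ, 0 < f (circleMap c R θ) := by
    filter_upwards [hcountable.ae_notMem volume] with θ hθ using hpos _ ⟨hmem θ, hθ⟩
  refine mul_pos (inv_pos.2 Real.two_pi_pos) ?_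
  rw [intervalIntegral.integral_pos_iff_support_of_nonneg_ae (hae.mono fun θ hθ => hθ.le)
    ((hf.comp_continuous (continuous_circleMap c R) hmem).intervalIntegrable _ _)]
  refine ⟨Real.two_pi_pos, ?_⟩
  have hnull : volume (Function.support fun θ => f (circleMap c R θ))ᶜ = 0 :=
    hae.mono fun θ hθ => hθ.ne'
  rw [Set.inter_comm, measure_inter_conull hnull, Real.volume_Ioc, sub_zero]
  exact ENNReal.ofReal_pos.2 Real.two_pi_pos

lemma circleAverage_smul_mem_of_convex [CompleteSpace E] {K : Set E} (hconv : Convex ℝ K)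
    (hclosed : IsClosed K) {F : ℂ → E} {κ : ℂ → ℝ} {c : ℂ} {R : ℝ}
    (hF : ContinuousOn F (sphere c |R|)) (hκ : ContinuousOn κ (sphere c |R|))
    (hFK : ∀ z ∈ sphere c |R|, F z ∈ K) (hκ0 : ∀ z ∈ sphere c |R|, 0 ≤ κ z)
    (hκ1 : circleAverage κ c R = 1) : circleAverage (fun z => κ z • F z) c R ∈ K := by
  by_contra hnotMem
  obtain ⟨L, u, hLu, hu⟩ := geometric_hahn_banach_closed_point hconv hclosed hnotMem
  have hle : circleAverage (fun z => κ z * L (F z)) c R ≤ circleAverage (fun z => u • κ z) c R :=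
    Real.circleAverage_mono (hκ.mul (L.continuous.comp_continuousOn hF)).circleIntegrable'
      (hκ.const_smul u).circleIntegrable' fun z hz => by
        rw [smul_eq_mul, mul_comm u]
        exact mul_le_mul_of_nonneg_left (hLu _ (hFK z hz)).le (hκ0 z hz)
  have hcomm : L (circleAverage (fun z => κ z • F z) c R) =
      circleAverage (fun z => κ z * L (F z)) c R := by
    rw [← L.circleAverage_comp_comm (f := fun z => κ z • F z)
      (ContinuousOn.circleIntegrable' (hκ.smul hF))]
    simp only [Function.comp_def, map_smul, smul_eq_mul]
  rw [Real.circleAverage_fun_smul, hκ1, smul_eq_mul, mul_one, ← hcomm] at hle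
  exact hu.not_ge hle

variable {p q : ℕ → ℂ}

lemma continuousOn_powSum_sphere (hp : Summable p) : ContinuousOn (powSum p) (sphere 0 |1|) :=
  (continuousOn_powSum hp).mono (by simpa using sphere_subset_closedBall)

lemma continuousOn_powSum_inv_sphere (hp : Summable p) :
    ContinuousOn (fun z => powSum p z⁻¹) (sphere 0 |1|) :=
  (continuousOn_powSum hp).comp
    (continuousOn_inv₀.mono fun z hz => ne_of_mem_sphere hz (by simp))
    fun z hz => by simp_all

lemma circleAverage_powSum_mul_inv_pow (hp : Summable p) (m : ℕ) :
    circleAverage (fun z => powSum p z * z⁻¹ ^ m) 0 1 = p m := by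
  have hterm (n : ℕ) : circleAverage (fun z => p n * (z ^ n * z⁻¹ ^ m)) 0 1 =
      if n = m then p n else 0 := by
    simp only [← smul_eq_mul (p n), Real.circleAverage_fun_smul, circleAverage_pow_mul_inv_pow]
    simp
  have hsum := hasSum_circleAverage (c := 0) (R := 1) (f := fun n z => p n * (z ^ n * z⁻¹ ^ m))
    hp.norm (fun n => ?_) fun n z hz => ?_
  · simp only [powSum, ← tsum_mul_right, mul_assoc]
    rw [← hsum.tsum_eq]
    simp only [hterm, tsum_ite_eq]
  · have : ∀ z ∈ sphere (0 : ℂ) |1|, z ≠ 0 := fun z hz => ne_of_mem_sphere hz (by simp)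
    fun_prop (disch := assumption)
  · have hnorm : ‖z‖ = 1 := by simpa using hz
    simp [hnorm]

lemma eq_of_eqOn_powSum_sphere (hp : Summable p) (hq : Summable q)
    (h : ∀ z : ℂ, ‖z‖ = 1 → powSum p z = powSum q z) : p = q := by
  funext n
  rw [← circleAverage_powSum_mul_inv_pow hp n, ← circleAverage_powSum_mul_inv_pow hq n]
  exact circleAverage_congr_sphere fun z hz => by simp only [h z (by simpa using hz)]

lemma circleAverage_powSum_mul_powSum_inv (hp : Summable p) (hq : Summable q) :
    circleAverage (fun z => powSum p z * powSum q z⁻¹) 0 1 = ∑' n, p n * q n := by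
  have hbdd : BddAbove ((fun z => ‖powSum p z‖) '' sphere 0 |1|) :=
    (isCompact_sphere _ _).bddAbove_image (continuousOn_powSum_sphere hp).norm
  obtain ⟨M, hM⟩ := hbdd
  have hterm (n : ℕ) : circleAverage (fun z => q n * (powSum p z * z⁻¹ ^ n)) 0 1 = p n * q n := by
    simp only [← smul_eq_mul (q n), Real.circleAverage_fun_smul,
      circleAverage_powSum_mul_inv_pow hp]
    rw [smul_eq_mul, mul_comm]
  have hsum := hasSum_circleAverage (c := 0) (R := 1)
    (f := fun n z => q n * (powSum p z * z⁻¹ ^ n)) (hq.norm.mul_right M) (fun n => ?_)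
    fun n z hz => ?_
  · simp only [hterm] at hsum
    rw [hsum.tsum_eq]
    congr 1
    funext z
    rw [powSum.eq_1 q, ← tsum_mul_left]
    exact tsum_congr fun n => by ring
  · have : ∀ z ∈ sphere (0 : ℂ) |1|, z ≠ 0 := fun z hz => ne_of_mem_sphere hz (by simp)
    have := continuousOn_powSum_sphere hp
    fun_prop (disch := assumption)
  · have hnorm : ‖z‖ = 1 := by simpa using hz
    have hMz : ‖powSum p z‖ ≤ M := hM ⟨z, hz, rfl⟩
    simp only [norm_mul, norm_pow, norm_inv, hnorm, inv_one, one_pow, mul_one]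
    gcongr

lemma diffContOnCl_powSum (hp : Summable p) : DiffContOnCl ℂ (powSum p) (ball 0 1) := by
  have hconv : ConvergesOnBall p 1 := fun z hz => summable_mul_pow_of_norm_le_one hp hz.le
  refine ⟨hconv.differentiableOn_powSum, ?_⟩
  rw [closure_ball _ one_ne_zero]
  exact continuousOn_powSum hp

lemma conj_powSum_inv {z : ℂ} (hz : ‖z‖ = 1) :
    (starRingEnd ℂ) (powSum q z⁻¹) = powSum (fun n => (starRingEnd ℂ) (q n)) z := by
  rw [inv_eq_conj hz, powSum, conj_tsum]
  exact tsum_congr fun n => by rw [map_mul, map_pow, conj_conj]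

lemma circleAverage_powSum_mul_conj_powSum_inv (hp : Summable p) (hq : Summable q) :
    circleAverage (fun z => powSum p z * (starRingEnd ℂ) (powSum q z⁻¹)) 0 1 =
      p 0 * (starRingEnd ℂ) (q 0) := by
  have hq' : Summable fun n => (starRingEnd ℂ) (q n) := summable_conj.2 hq
  have hdiff : DiffContOnCl ℂ (fun z => powSum p z * powSum (fun n => (starRingEnd ℂ) (q n)) z)
      (ball 0 |1|) := by
    simpa using (diffContOnCl_powSum hp).smul (diffContOnCl_powSum hq')
  rw [← powSum_zero p, ← powSum_zero fun n => (starRingEnd ℂ) (q n), ← hdiff.circleAverage]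
  exact circleAverage_congr_sphere fun z hz => by
    simp only [conj_powSum_inv (show ‖z‖ = 1 by simpa using hz)]

/-- The real part of `2 q(w) / q(0) - 1` for the power series `q`. On the unit circle, integrating
an analytic function against it pairs the two coefficient sequences; where it is nonnegative it is
the density of a probability measure, as in the Herglotz representation of `q`. -/
noncomputable def herglotzKernel (q : ℕ → ℂ) (w : ℂ) : ℝ := (2 * (powSum q w / q 0) - 1).re

lemma continuousOn_herglotzKernel_inv (hq : Summable q) :
    ContinuousOn (fun z => herglotzKernel q z⁻¹) (sphere 0 |1|) := by
  have := continuousOn_powSum_inv_sphere hq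
  unfold herglotzKernel
  fun_prop

lemma ofReal_herglotzKernel (q : ℕ → ℂ) (w : ℂ) :
    (herglotzKernel q w : ℂ) =
      powSum q w / q 0 + (starRingEnd ℂ) (powSum q w) / (starRingEnd ℂ) (q 0) - 1 := by
  rw [herglotzKernel, re_eq_add_conj]
  simp only [map_sub, map_mul, map_div₀, map_one, map_ofNat]
  ring

lemma circleAverage_herglotzKernel_mul_powSum (hp : Summable p) (hq : Summable q) (hq0 : q 0 ≠ 0) :
    circleAverage (fun z => (herglotzKernel q z⁻¹ : ℂ) * powSum p z) 0 1 =
      (∑' n, p n * q n) / q 0 := by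
  have hpc := continuousOn_powSum_sphere hp
  have hqc := continuousOn_powSum_inv_sphere hq
  have hconst : circleAverage (powSum p) 0 1 = p 0 := by
    rw [DiffContOnCl.circleAverage (by simpa using diffContOnCl_powSum hp), powSum_zero]
  have hexpand : (fun z => (herglotzKernel q z⁻¹ : ℂ) * powSum p z) = fun z =>
      (q 0)⁻¹ • (powSum p z * powSum q z⁻¹) +
        ((starRingEnd ℂ) (q 0))⁻¹ • (powSum p z * (starRingEnd ℂ) (powSum q z⁻¹)) - powSum p z := by
    funext z
    rw [ofReal_herglotzKernel, smul_eq_mul, smul_eq_mul]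
    ring
  rw [hexpand, Real.circleAverage_fun_sub, Real.circleAverage_fun_add,
    Real.circleAverage_fun_smul, Real.circleAverage_fun_smul,
    circleAverage_powSum_mul_powSum_inv hp hq, circleAverage_powSum_mul_conj_powSum_inv hp hq,
    hconst]
  · have hq0' : (starRingEnd ℂ) (q 0) ≠ 0 := (map_ne_zero _).2 hq0
    simp only [smul_eq_mul]
    field_simp
    ring
  all_goals
    apply ContinuousOn.circleIntegrable'
    fun_prop

lemma circleAverage_herglotzKernel (hq : Summable q) (hq0 : q 0 ≠ 0) :
    circleAverage (fun z => herglotzKernel q z⁻¹) 0 1 = 1 := by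
  have hone (z : ℂ) : powSum (Pi.single 0 1) z = 1 := by
    rw [powSum, tsum_eq_single 0 fun n hn => by simp [hn]]
    simp
  have hfinite : Summable (Pi.single 0 1 : ℕ → ℂ) :=
    summable_of_ne_finset_zero (s := {0}) fun n hn => by simp_all
  have havg := circleAverage_herglotzKernel_mul_powSum hfinite hq hq0
  have hcoeff : ∑' n, (Pi.single 0 1 : ℕ → ℂ) n * q n = q 0 := by
    rw [tsum_eq_single 0 fun n hn => by simp [hn], Pi.single_eq_same, one_mul]
  have hcomm := ofRealCLM.circleAverage_comp_comm
    (continuousOn_herglotzKernel_inv hq).circleIntegrable'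
  simp only [hone, mul_one, hcoeff, div_self hq0] at havg
  exact ofReal_injective ((hcomm.symm.trans havg).trans ofReal_one.symm)

lemma tsum_mul_div_mem_of_convex {K : Set ℂ} (hconv : Convex ℝ K) (hclosed : IsClosed K)
    (hp : Summable p) (hq : Summable q) (hq0 : q 0 ≠ 0) (hpK : ∀ z : ℂ, ‖z‖ = 1 → powSum p z ∈ K)
    (hpos : ∀ w : ℂ, ‖w‖ = 1 → 0 ≤ herglotzKernel q w) : (∑' n, p n * q n) / q 0 ∈ K := by
  rw [← circleAverage_herglotzKernel_mul_powSum hp hq hq0]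
  exact circleAverage_smul_mem_of_convex hconv hclosed (continuousOn_powSum_sphere hp)
    (continuousOn_herglotzKernel_inv hq) (fun z hz => hpK z (by simpa using hz))
    (fun z hz => hpos _ (by simp_all)) (circleAverage_herglotzKernel hq hq0)

lemma tsum_mul_ne_zero_of_re_pos (hp : Summable p) (hq : Summable q) (hq0 : q 0 ≠ 0) {S : Set ℂ}
    (hS : S.Countable) (c : ℂ) (hp_pos : ∀ z : ℂ, ‖z‖ = 1 → z ∉ S → 0 < (c * powSum p z).re)
    (hq_pos : ∀ z : ℂ, ‖z‖ = 1 → z ∉ S → 0 < herglotzKernel q z⁻¹) : ∑' n, p n * q n ≠ 0 := by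
  intro hzero
  have hκ := continuousOn_herglotzKernel_inv hq
  have hpc := continuousOn_powSum_sphere hp
  have hpos : 0 < circleAverage (fun z => herglotzKernel q z⁻¹ * (c * powSum p z).re) 0 1 :=
    circleAverage_pos one_ne_zero (by fun_prop) hS fun z ⟨hz, hzS⟩ =>
      mul_pos (hq_pos z (by simpa using hz) hzS) (hp_pos z (by simpa using hz) hzS)
  have hintegrable :
      CircleIntegrable (fun z => c • ((herglotzKernel q z⁻¹ : ℂ) * powSum p z)) 0 1 :=
    ContinuousOn.circleIntegrable' (by fun_prop)
  have hcomm := reCLM.circleAverage_comp_comm hintegrable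
  rw [Real.circleAverage_fun_smul, circleAverage_herglotzKernel_mul_powSum hp hq hq0, hzero,
    zero_div, smul_zero, map_zero] at hcomm
  refine hpos.ne' (hcomm ▸ congrArg (circleAverage · 0 1) (funext fun z => ?_))
  simp only [Function.comp_apply, reCLM_apply, smul_eq_mul]
  rw [mul_left_comm, re_ofReal_mul]

end CircleAverage

section Correlation

open Finset.HasAntidiagonal (antidiagonal mem_antidiagonal)
open Bornology (IsBounded)

/-- The coefficients of the product of two power series. -/
def cauchyProduct (X Y : ℕ → ℂ) (n : ℕ) : ℂ := ∑ p ∈ antidiagonal n, X p.1 * Y p.2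

/-- The correlation `∑ₖ Xₖ Yⱼ₊ₖ` of two sequences: the transpose of the Cauchy product by `X`. -/
noncomputable def corr (X Y : ℕ → ℂ) (j : ℕ) : ℂ := ∑' k, X k * Y (j + k)

variable {X Y Z : ℕ → ℂ}

lemma cauchyProduct_comm (X Y : ℕ → ℂ) : cauchyProduct X Y = cauchyProduct Y X := by
  funext n
  rw [cauchyProduct, ← Finset.Nat.sum_antidiagonal_swap]
  exact Finset.sum_congr rfl fun p _ => mul_comm _ _

lemma cauchyProduct_mul_pow (X Y : ℕ → ℂ) (r : ℂ) (n : ℕ) :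
    cauchyProduct (fun n => X n * r ^ n) (fun n => Y n * r ^ n) n =
      cauchyProduct X Y n * r ^ n := by
  rw [cauchyProduct, cauchyProduct, Finset.sum_mul]
  refine Finset.sum_congr rfl fun p hp => ?_
  rw [← mem_antidiagonal.1 hp, pow_add]
  ring

lemma summable_cauchyProduct (hX : Summable X) (hY : Summable Y) : Summable (cauchyProduct X Y) :=
  (summable_norm_sum_mul_antidiagonal_of_summable_norm hX.norm hY.norm).of_norm

lemma powSum_cauchyProduct (hX : Summable X) (hY : Summable Y) {z : ℂ} (hz : ‖z‖ ≤ 1) :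
    powSum (cauchyProduct X Y) z = powSum X z * powSum Y z := by
  rw [powSum.eq_1 X, powSum.eq_1 Y, tsum_mul_tsum_eq_tsum_sum_antidiagonal_of_summable_norm
    (summable_mul_pow_of_norm_le_one hX hz).norm (summable_mul_pow_of_norm_le_one hY hz).norm]
  exact tsum_congr fun n => (cauchyProduct_mul_pow X Y z n).symm

lemma isBounded_range_of_summable (hX : Summable X) : IsBounded (Set.range X) :=
  isBounded_range_of_tendsto X hX.tendsto_atTop_zero

lemma isBounded_range_pow {w : ℂ} (hw : ‖w‖ ≤ 1) : IsBounded (Set.range fun n : ℕ => w ^ n) :=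
  isBounded_iff_forall_norm_le.2 ⟨1, by
    rintro _ ⟨n, rfl⟩
    rw [norm_pow]
    exact pow_le_one₀ (norm_nonneg _) hw⟩

lemma summable_mul_of_isBounded (hX : IsBounded (Set.range X)) (hY : Summable Y) :
    Summable fun n => X n * Y n := by
  obtain ⟨M, hM⟩ := isBounded_iff_forall_norm_le.1 hX
  refine (hY.norm.mul_left M).of_norm_bounded fun n => ?_
  rw [norm_mul]
  gcongr
  exact hM _ ⟨n, rfl⟩

lemma summable_norm_add (hY : Summable fun n : ℕ => (n + 1 : ℝ) * ‖Y n‖) :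
    Summable fun p : ℕ × ℕ => ‖Y (p.1 + p.2)‖ := by
  rw [← Finset.HasAntidiagonal.sigmaAntidiagonalEquivProd.summable_iff]
  refine (summable_sigma_of_nonneg fun _ => norm_nonneg _).2
    ⟨fun n => (hasSum_fintype _).summable, hY.congr fun n => ?_⟩
  have hterm (p : antidiagonal n) : ‖Y (p.1.1 + p.1.2)‖ = ‖Y n‖ := by rw [mem_antidiagonal.1 p.2]
  simp only [tsum_fintype]
  refine .trans ?_ (Finset.sum_congr rfl fun p _ => (hterm p).symm)
  simp

lemma summable_mul_mul_add (hZ : IsBounded (Set.range Z)) (hX : IsBounded (Set.range X))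
    (hY : Summable fun n : ℕ => (n + 1 : ℝ) * ‖Y n‖) :
    Summable fun p : ℕ × ℕ => Z p.1 * (X p.2 * Y (p.1 + p.2)) := by
  obtain ⟨M, hM⟩ := isBounded_iff_forall_norm_le.1 hZ
  obtain ⟨N, hN⟩ := isBounded_iff_forall_norm_le.1 hX
  have hM0 : 0 ≤ M := (norm_nonneg _).trans (hM _ ⟨0, rfl⟩)
  refine .of_norm_bounded ((summable_norm_add hY).mul_left (M * N)) fun p => ?_
  rw [norm_mul, norm_mul, ← mul_assoc]
  gcongr
  exacts [hM _ ⟨_, rfl⟩, hN _ ⟨_, rfl⟩]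

lemma hasSum_cauchyProduct_mul (hZ : IsBounded (Set.range Z)) (hX : IsBounded (Set.range X))
    (hY : Summable fun n : ℕ => (n + 1 : ℝ) * ‖Y n‖) :
    HasSum (fun n => cauchyProduct Z X n * Y n) (∑' j, Z j * corr X Y j) := by
  have hsum := summable_mul_mul_add hZ hX hY
  have hsigma := Finset.HasAntidiagonal.sigmaAntidiagonalEquivProd.hasSum_iff.2 hsum.hasSum
  simp only [corr, ← tsum_mul_left]
  rw [← hsum.tsum_prod]
  refine (hsigma.sigma fun n => hasSum_fintype _).congr_fun fun n => ?_
  rw [cauchyProduct, Finset.sum_mul]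
  refine .trans ?_ (Finset.sum_coe_sort (antidiagonal n)
    fun p => Z p.1 * (X p.2 * Y (p.1 + p.2))).symm
  refine Finset.sum_congr rfl fun p hp => ?_
  rw [mem_antidiagonal.1 hp, mul_assoc]

lemma summable_corr (hX : IsBounded (Set.range X))
    (hY : Summable fun n : ℕ => (n + 1 : ℝ) * ‖Y n‖) : Summable (corr X Y) := by
  have hone : IsBounded (Set.range fun _ : ℕ => (1 : ℂ)) := by
    simp
  exact (summable_mul_mul_add hone hX hY).prod.congr fun j => by simp only [one_mul, corr]

lemma powSum_corr (hX : IsBounded (Set.range X))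
    (hY : Summable fun n : ℕ => (n + 1 : ℝ) * ‖Y n‖) {w : ℂ} (hw : ‖w‖ ≤ 1) :
    powSum (corr X Y) w = ∑' n, cauchyProduct (fun j => w ^ j) X n * Y n := by
  rw [(hasSum_cauchyProduct_mul (isBounded_range_pow hw) hX hY).tsum_eq]
  exact tsum_congr fun j => mul_comm _ _

lemma summable_of_summable_succ_mul_norm (hY : Summable fun n : ℕ => (n + 1 : ℝ) * ‖Y n‖) :
    Summable Y :=
  hY.of_norm_bounded fun n => le_mul_of_one_le_left (norm_nonneg _) (by simp)

lemma summable_shift_succ_mul_norm (hY : Summable fun n : ℕ => (n + 1 : ℝ) * ‖Y n‖) :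
    Summable fun n : ℕ => (n + 1 : ℝ) * ‖Y (n + 1)‖ :=
  .of_nonneg_of_le (fun n => by positivity) (fun n => by push_cast; gcongr; linarith)
    ((summable_nat_add_iff 1).2 hY)

end Correlation

section TwoPoint

variable {A B : ℕ → ℂ} {h : ℂ → ℂ} {u v z ζ η σ : ℂ} {r : ℝ}

/-- The two-point inequality on the circle of radius `r`. It is the form in which starlikeness of
order `1/2` enters the convolution argument. -/
def TwoPointPositive (h : ℂ → ℂ) (r : ℝ) : Prop :=
  ∀ z ζ : ℂ, ‖z‖ = r → ‖ζ‖ = r → z ≠ ζ → 0 < ((ζ / z - 1) * (h z / h ζ)).re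

lemma TwoPointPositive.ne_zero (hh : TwoPointPositive h r) (hr : 0 < r) (hζ : ‖ζ‖ = r) :
    h ζ ≠ 0 := by
  intro hzero
  have hζ0 : ζ ≠ 0 := norm_pos_iff.1 (hζ ▸ hr)
  have hpos := hh (-ζ) ζ (by rw [norm_neg, hζ]) hζ (neg_eq_self.not.2 hζ0)
  simp [hzero] at hpos

lemma TwoPointPositive.powSum_mul_pow (hh : TwoPointPositive (powSum B) (‖v‖ * r)) (hv : v ≠ 0) :
    TwoPointPositive (powSum fun n => B n * v ^ n) r := by
  intro z ζ hz hζ hne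
  have hpos := hh (v * z) (v * ζ) (by simp [hz]) (by simp [hζ]) (by simpa [hv] using hne)
  rwa [mul_div_mul_left _ _ hv, ← _root_.powSum_mul_pow, ← _root_.powSum_mul_pow] at hpos

-- `2 / (1 - u) - 1` is purely imaginary on the unit circle.
lemma re_two_mul_one_sub_div_sub_one_pos (hu : ‖u‖ = 1) (hu1 : u ≠ 1)
    (h : 0 < ((u⁻¹ - 1) * v).re) : 0 < (2 * ((1 - v) / (1 - u)) - 1).re := by
  have hnormSq : u.re * u.re + u.im * u.im = 1 := by
    rw [← normSq_apply, ← Complex.sq_norm, hu, one_pow]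
  have hpos : 0 < normSq (1 - u) := normSq_pos.2 (sub_ne_zero.2 hu1.symm)
  have hvalue : (2 * ((1 - v) / (1 - u)) - 1).re =
      2 * ((u⁻¹ - 1) * v).re / normSq (1 - u) := by
    rw [inv_eq_conj hu, eq_div_iff hpos.ne']
    simp only [sub_re, mul_re, div_re, re_ofNat, im_ofNat, one_re, one_im, sub_im, conj_re,
      conj_im, div_im]
    field_simp
    simp only [normSq_apply, sub_re, sub_im, one_re, one_im]
    linear_combination -hnormSq
  rw [hvalue]
  positivity

lemma sub_mul_cauchyProduct_pow (w σ : ℂ) (n : ℕ) :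
    (σ - w) * cauchyProduct (fun j => w ^ j) (fun k => σ ^ k) n = σ ^ (n + 1) - w ^ (n + 1) := by
  rw [cauchyProduct, Finset.Nat.sum_antidiagonal_eq_sum_range_succ fun i j => w ^ i * σ ^ j,
    ← neg_sub (w ^ (n + 1)), ← geom_sum₂_mul, ← neg_sub w, neg_mul, mul_comm]
  rfl

lemma corr_pow_zero (hB0 : B 0 = 0) (hσ : σ ≠ 0) :
    corr (fun k => σ ^ k) (fun n => B (n + 1)) 0 = powSum B σ / σ := by
  rw [powSum_eq_mul_powSum_succ hB0, mul_div_cancel_left₀ _ hσ]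
  exact tsum_congr fun k => by rw [zero_add, mul_comm]

lemma sub_mul_powSum_corr_pow (hB : Summable fun n : ℕ => (n + 1 : ℝ) * ‖B n‖) (hB0 : B 0 = 0)
    (hσ : ‖σ‖ ≤ 1) (hz : ‖z‖ ≤ 1) :
    (σ - z) * powSum (corr (fun k => σ ^ k) fun n => B (n + 1)) z = powSum B σ - powSum B z := by
  have hsum := (summable_nat_add_iff 1).2 (summable_of_summable_succ_mul_norm hB)
  rw [powSum_corr (isBounded_range_pow hσ) (summable_shift_succ_mul_norm hB) hz, ← tsum_mul_left,
    powSum_eq_mul_powSum_succ hB0, powSum_eq_mul_powSum_succ hB0 z, powSum, powSum,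
    ← tsum_mul_left, ← tsum_mul_left,
    ← ((summable_mul_pow_of_norm_le_one hsum hσ).mul_left σ).tsum_sub
      ((summable_mul_pow_of_norm_le_one hsum hz).mul_left z)]
  refine tsum_congr fun n => ?_
  rw [← mul_assoc, sub_mul_cauchyProduct_pow]
  ring

lemma herglotzKernel_corr_pow_pos (hB : Summable fun n : ℕ => (n + 1 : ℝ) * ‖B n‖) (hB0 : B 0 = 0)
    (hBpos : TwoPointPositive (powSum B) 1) (hσ : ‖σ‖ = 1) (hz : ‖z‖ = 1) (hne : z ≠ σ) :
    0 < herglotzKernel (corr (fun k => σ ^ k) fun n => B (n + 1)) z := by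
  have hσ0 : σ ≠ 0 := norm_pos_iff.1 (hσ ▸ one_pos)
  have hBσ : powSum B σ ≠ 0 := hBpos.ne_zero one_pos hσ
  have hsub : σ - z ≠ 0 := sub_ne_zero.2 hne.symm
  have hquot : powSum (corr (fun k => σ ^ k) fun n => B (n + 1)) z /
      corr (fun k => σ ^ k) (fun n => B (n + 1)) 0 =
        (1 - powSum B z / powSum B σ) / (1 - z / σ) := by
    rw [eq_div_of_mul_eq hsub ((mul_comm _ _).trans (sub_mul_powSum_corr_pow hB hB0 hσ.le hz.le)),
      corr_pow_zero hB0 hσ0, one_sub_div hσ0, one_sub_div hBσ]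
    field_simp
  rw [herglotzKernel, hquot]
  refine re_two_mul_one_sub_div_sub_one_pos (by rw [norm_div, hz, hσ, div_one])
    (by rwa [ne_eq, div_eq_one_iff_eq hσ0]) ?_
  simpa only [inv_div] using hBpos z σ hz hσ hne

lemma mul_powSum_succ_sub (hA : Summable A) (hA0 : A 0 = 0) (c : ℂ) (hz : ‖z‖ ≤ 1) :
    z * powSum (fun n => A (n + 1) - c * A n) z = (1 - c * z) * powSum A z := by
  have hsub : powSum (fun n => A (n + 1) - c * A n) z =
      powSum (fun n => A (n + 1)) z - c * powSum A z := by
    rw [powSum, powSum, powSum, ← tsum_mul_left, ← (summable_mul_pow_of_norm_le_one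
      ((summable_nat_add_iff 1).2 hA) hz).tsum_sub
      ((summable_mul_pow_of_norm_le_one hA hz).mul_left c)]
    exact tsum_congr fun n => by ring
  rw [hsub, mul_sub, ← powSum_eq_mul_powSum_succ hA0]
  ring

lemma re_mul_powSum_succ_sub_pos (hA : Summable A) (hA0 : A 0 = 0)
    (hApos : TwoPointPositive (powSum A) 1) (hζ : ‖ζ‖ = 1) (hz : ‖z‖ = 1) (hne : z ≠ ζ) :
    0 < (ζ / powSum A ζ * powSum (fun n => A (n + 1) - ζ⁻¹ * A n) z).re := by
  have hζ0 : ζ ≠ 0 := norm_pos_iff.1 (hζ ▸ one_pos)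
  have hz0 : z ≠ 0 := norm_pos_iff.1 (hz ▸ one_pos)
  have hvalue : ζ / powSum A ζ * powSum (fun n => A (n + 1) - ζ⁻¹ * A n) z =
      (ζ / z - 1) * (powSum A z / powSum A ζ) := by
    rw [eq_div_of_mul_eq hz0 ((mul_comm _ _).trans (mul_powSum_succ_sub hA hA0 ζ⁻¹ hz.le))]
    field_simp
  rw [hvalue]
  exact hApos z ζ hz hζ hne

lemma cauchyProduct_succ_sub_pow (hA0 : A 0 = 0) (η σ : ℂ) (n : ℕ) :
    cauchyProduct (fun n => A (n + 1) - η * σ * A n) (fun k => σ ^ k) n =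
      (1 - η) * cauchyProduct A (fun k => σ ^ k) (n + 1) + η * A (n + 1) := by
  have hleft : cauchyProduct A (fun k => σ ^ k) (n + 1) =
      cauchyProduct (fun n => A (n + 1)) (fun k => σ ^ k) n := by
    simp only [cauchyProduct, Finset.Nat.sum_antidiagonal_succ, hA0, zero_mul, zero_add]
  have hright : cauchyProduct A (fun k => σ ^ k) (n + 1) =
      A (n + 1) + σ * cauchyProduct A (fun k => σ ^ k) n := by
    simp only [cauchyProduct, Finset.Nat.sum_antidiagonal_succ', pow_zero, mul_one, Finset.mul_sum,
      pow_succ']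
    simp only [mul_left_comm]
  have hsub : cauchyProduct (fun n => A (n + 1) - η * σ * A n) (fun k => σ ^ k) n =
      cauchyProduct (fun n => A (n + 1)) (fun k => σ ^ k) n -
        η * σ * cauchyProduct A (fun k => σ ^ k) n := by
    simp only [cauchyProduct, Finset.mul_sum, ← Finset.sum_sub_distrib, sub_mul, mul_assoc]
  rw [hsub, ← hleft]
  linear_combination η * hright

lemma tsum_interpolation_ne_zero (hA : Summable A) (hA0 : A 0 = 0)
    (hApos : TwoPointPositive (powSum A) 1) (hB : Summable fun n : ℕ => (n + 1 : ℝ) * ‖B n‖)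
    (hB0 : B 0 = 0) (hBpos : TwoPointPositive (powSum B) 1) (hσ : ‖σ‖ = 1) (hη : ‖η‖ = 1) :
    ∑' n, ((1 - η) * cauchyProduct A (fun k => σ ^ k) (n + 1) + η * A (n + 1)) * B (n + 1) ≠ 0 := by
  have hσ0 : σ ≠ 0 := norm_pos_iff.1 (hσ ▸ one_pos)
  have hBσ : powSum B σ ≠ 0 := hBpos.ne_zero one_pos hσ
  have hP : Summable fun n => A (n + 1) - η * σ * A n :=
    ((summable_nat_add_iff 1).2 hA).sub (hA.mul_left _)
  have hpow := isBounded_range_pow hσ.le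
  have hB' := summable_shift_succ_mul_norm hB
  simp only [← cauchyProduct_succ_sub_pow hA0]
  rw [(hasSum_cauchyProduct_mul (isBounded_range_of_summable hP) hpow hB').tsum_eq]
  refine tsum_mul_ne_zero_of_re_pos hP (summable_corr hpow hB') (S := {(η * σ)⁻¹, σ⁻¹})
    (by rw [corr_pow_zero hB0 hσ0]; exact div_ne_zero hBσ hσ0) (Set.toFinite _).countable
    ((η * σ)⁻¹ / powSum A (η * σ)⁻¹) (fun z hz hzS => ?_) fun z hz hzS => ?_
  · simpa only [inv_inv] using re_mul_powSum_succ_sub_pos hA hA0 hApos (ζ := (η * σ)⁻¹)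
      (by simp [hη, hσ]) hz fun h => hzS (.inl h)
  · exact herglotzKernel_corr_pow_pos hB hB0 hBpos hσ (by simp [hz])
      fun h => hzS (.inr (by rw [← h, inv_inv]; rfl))

end TwoPoint

section Convolution

-- `2 M / N - 1` cannot be imaginary: if it were some `q`, then `η = (q + 1) / (q - 1)` would make
-- the interpolation vanish.
lemma re_two_mul_div_sub_one_pos_of_isPreconnected {X : Type*} [TopologicalSpace X] {S : Set X}
    (hS : IsPreconnected S) {M N : X → ℂ} (hM : ContinuousOn M S) (hN : ContinuousOn N S) {x₀ x : X}
    (hx₀ : x₀ ∈ S) (hx : x ∈ S) (heq : M x₀ = N x₀)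
    (hne : ∀ y ∈ S, ∀ η : ℂ, ‖η‖ = 1 → (1 - η) * M y + η * N y ≠ 0) :
    N x ≠ 0 ∧ 0 < (2 * (M x / N x) - 1).re := by
  have hN0 : ∀ y ∈ S, N y ≠ 0 := fun y hy => by simpa using hne y hy 1 norm_one
  refine ⟨hN0 x hx, ?_⟩
  by_contra! hle
  have hcont : ContinuousOn (fun y => (2 * (M y / N y) - 1).re) S :=
    continuous_re.comp_continuousOn (((hM.div hN hN0).const_mul 2).sub continuousOn_const)
  have hstart : (2 * (M x₀ / N x₀) - 1).re = 1 := by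
    rw [heq, div_self (hN0 _ hx₀)]
    norm_num
  obtain ⟨y, hy, hre⟩ := hS.intermediate_value hx hx₀ hcont ⟨hle, hstart ▸ zero_le_one⟩
  set q := 2 * (M y / N y) - 1 with hq
  have hNy := hN0 y hy
  have hq1 : q - 1 ≠ 0 := fun h => by
    have := congrArg re h
    simp only [sub_re, show q.re = 0 from hre, one_re, zero_re] at this
    norm_num at this
  have hnorm : ‖q + 1‖ = ‖q - 1‖ := by
    rw [← sq_eq_sq₀ (norm_nonneg _) (norm_nonneg _), Complex.sq_norm, Complex.sq_norm, normSq_apply,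
      normSq_apply]
    simp only [add_re, sub_re, add_im, sub_im, one_re, one_im, show q.re = 0 from hre]
    ring
  refine hne y hy ((q + 1) / (q - 1))
    (by rw [norm_div, hnorm, div_self (norm_ne_zero_iff.2 hq1)]) ?_
  have hMy : M y = N y * (q + 1) / 2 := by
    rw [hq]
    field_simp
    ring
  rw [hMy]
  field_simp
  ring

variable {A B F : ℕ → ℂ} {v η σ : ℂ}

lemma powSum_interpolation_ne_zero (hA : Summable A) (hA0 : A 0 = 0)
    (hApos : TwoPointPositive (powSum A) 1) (hB : Summable fun n : ℕ => (n + 1 : ℝ) * ‖B n‖)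
    (hB0 : B 0 = 0) (hBpos : ∀ t ∈ Set.Ioc (0 : ℝ) 1, TwoPointPositive (powSum B) t)
    (hAB : A 1 * B 1 ≠ 0) (hσ : ‖σ‖ = 1) (hη : ‖η‖ = 1) (hv : ‖v‖ ≤ 1) :
    powSum (fun n => ((1 - η) * cauchyProduct A (fun k => σ ^ k) (n + 1) + η * A (n + 1)) *
      B (n + 1)) v ≠ 0 := by
  rcases eq_or_ne v 0 with rfl | hv0
  · simpa [powSum_zero, cauchyProduct, Finset.Nat.sum_antidiagonal_succ, hA0, ← add_mul] using hAB
  · have hBv : Summable fun n : ℕ => (n + 1 : ℝ) * ‖B n * v ^ n‖ :=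
      .of_nonneg_of_le (fun n => by positivity)
        (fun n => mul_le_mul_of_nonneg_left (norm_mul_pow_le_norm (B n) hv n) (by positivity)) hB
    have hne := tsum_interpolation_ne_zero hA hA0 hApos hBv (by simp [hB0])
      (TwoPointPositive.powSum_mul_pow
        (hBpos _ (by simpa using And.intro hv0 hv)) hv0) hσ hη
    refine right_ne_zero_of_mul (a := v) ?_
    rw [powSum, ← tsum_mul_left]
    convert hne using 1
    exact tsum_congr fun n => by ring

lemma herglotzKernel_corr_pos (hA : Summable A) (hA0 : A 0 = 0)
    (hApos : TwoPointPositive (powSum A) 1) (hB : Summable fun n : ℕ => (n + 1 : ℝ) * ‖B n‖)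
    (hB0 : B 0 = 0) (hBpos : ∀ t ∈ Set.Ioc (0 : ℝ) 1, TwoPointPositive (powSum B) t)
    (hAB : A 1 * B 1 ≠ 0) (hσ : ‖σ‖ = 1) :
    corr A B 0 ≠ 0 ∧ 0 < herglotzKernel (corr A B) σ := by
  set C := cauchyProduct A fun k => σ ^ k with hC
  have hAb := isBounded_range_of_summable hA
  have hCB : Summable fun n => C n * B n :=
    (hasSum_cauchyProduct_mul hAb (isBounded_range_pow hσ.le) hB).summable
  have hAB' : Summable fun n => A n * B n :=
    summable_mul_of_isBounded hAb (summable_of_summable_succ_mul_norm hB)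
  have hC0 : C 0 = 0 := by simp [hC, cauchyProduct, hA0]
  have hC1 : C 1 = A 1 := by simp [hC, cauchyProduct, Finset.Nat.sum_antidiagonal_succ, hA0]
  set M := powSum fun n => C (n + 1) * B (n + 1) with hM
  set N := powSum fun n => A (n + 1) * B (n + 1) with hN
  have hCB' := (summable_nat_add_iff 1).2 hCB
  have hAB'' := (summable_nat_add_iff 1).2 hAB'
  have hM1 : M 1 = powSum (corr A B) σ := by
    rw [powSum_corr hAb hB hσ.le, cauchyProduct_comm, ← hC, hCB.tsum_eq_zero_add, hC0]
    simp [hM, powSum]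
  have hN1 : N 1 = corr A B 0 := by
    rw [corr, ← tsum_congr fun n => by rw [zero_add], hAB'.tsum_eq_zero_add, hA0]
    simp [hN, powSum]
  rw [herglotzKernel, ← hM1, ← hN1]
  refine re_two_mul_div_sub_one_pos_of_isPreconnected (convex_closedBall (0 : ℂ) 1).isPreconnected
    (continuousOn_powSum hCB') (continuousOn_powSum hAB'') (mem_closedBall_self zero_le_one)
    (by simp) (by rw [powSum_zero, powSum_zero, hC1]) fun v hv η hη => ?_
  have hv1 : ‖v‖ ≤ 1 := by simpa using hv
  have hlinear : (1 - η) * M v + η * N v =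
      powSum (fun n => ((1 - η) * C (n + 1) + η * A (n + 1)) * B (n + 1)) v := by
    rw [hM, hN, powSum, powSum, ← tsum_mul_left, ← tsum_mul_left,
      ← ((summable_mul_pow_of_norm_le_one hCB' hv1).mul_left _).tsum_add
        ((summable_mul_pow_of_norm_le_one hAB'' hv1).mul_left _)]
    exact tsum_congr fun n => by ring
  exact hlinear ▸ powSum_interpolation_ne_zero hA hA0 hApos hB hB0 hBpos hAB hσ hη hv1

lemma tsum_cauchyProduct_mul_div_mem_of_convex {K : Set ℂ} (hconv : Convex ℝ K)
    (hclosed : IsClosed K) (hA : Summable A) (hA0 : A 0 = 0)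
    (hApos : TwoPointPositive (powSum A) 1) (hB : Summable fun n : ℕ => (n + 1 : ℝ) * ‖B n‖)
    (hB0 : B 0 = 0) (hBpos : ∀ t ∈ Set.Ioc (0 : ℝ) 1, TwoPointPositive (powSum B) t)
    (hAB : A 1 * B 1 ≠ 0) (hF : Summable F) (hFK : ∀ z : ℂ, ‖z‖ = 1 → powSum F z ∈ K) :
    ∑' n, A n * B n ≠ 0 ∧ (∑' n, cauchyProduct F A n * B n) / ∑' n, A n * B n ∈ K := by
  have hAb := isBounded_range_of_summable hA
  have hpos {σ : ℂ} (hσ : ‖σ‖ = 1) := herglotzKernel_corr_pos hA hA0 hApos hB hB0 hBpos hAB hσ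
  have hcorr : corr A B 0 = ∑' n, A n * B n := tsum_congr fun n => by rw [zero_add]
  have hcorr0 : corr A B 0 ≠ 0 := (hpos norm_one).1
  rw [(hasSum_cauchyProduct_mul (isBounded_range_of_summable hF) hAb hB).tsum_eq, ← hcorr]
  exact ⟨hcorr0, tsum_mul_div_mem_of_convex hconv hclosed hF (summable_corr hAb hB) hcorr0 hFK
    fun σ hσ => (hpos hσ).2.le⟩

theorem powSum_cauchyProduct_mul_div_mem_of_convex {K : Set ℂ} (hconv : Convex ℝ K)
    (hclosed : IsClosed K) {R S : ℝ} (hS : 0 < S) (hA : ConvergesOnBall A R) (hA0 : A 0 = 0)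
    (hApos : ∀ r ∈ Set.Ioo 0 R, TwoPointPositive (powSum A) r) (hB : ConvergesOnBall B S)
    (hB0 : B 0 = 0) (hBpos : ∀ r ∈ Set.Ioo 0 S, TwoPointPositive (powSum B) r)
    (hAB : A 1 * B 1 ≠ 0) (hF : ConvergesOnBall F R) (hFK : ∀ z : ℂ, ‖z‖ < R → powSum F z ∈ K)
    (hv0 : v ≠ 0) (hv : ‖v‖ < R * S) :
    powSum (fun n => A n * B n) v ≠ 0 ∧
      powSum (fun n => cauchyProduct F A n * B n) v / powSum (fun n => A n * B n) v ∈ K := by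
  obtain ⟨r, hvr, hrR⟩ := exists_between ((div_lt_iff₀ hS).2 hv)
  have hv_pos : 0 < ‖v‖ := norm_pos_iff.2 hv0
  have hr : 0 < r := (div_pos hv_pos hS).trans hvr
  have hr0 : (r : ℂ) ≠ 0 := ofReal_ne_zero.2 hr.ne'
  have hrnorm : ‖(r : ℂ)‖ = r := by simp [hr.le]
  set s := v / r with hs
  have hs0 : s ≠ 0 := div_ne_zero hv0 hr0
  have hsS : ‖s‖ < S := by
    rwa [hs, norm_div, hrnorm, div_lt_comm₀ hr hS]
  have hcoeff (X : ℕ → ℂ) :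
      powSum (fun n => X n * B n) v = ∑' n, X n * r ^ n * (B n * s ^ n) :=
    tsum_congr fun n => by
      rw [hs, div_pow]
      field_simp
  simp only [hcoeff, ← cauchyProduct_mul_pow]
  refine tsum_cauchyProduct_mul_div_mem_of_convex hconv hclosed (hA r (by rwa [hrnorm]))
    (by simp [hA0])
    (TwoPointPositive.powSum_mul_pow (hApos _ (by rw [hrnorm, mul_one]; exact ⟨hr, hrR⟩)) hr0)
    (hB.summable_succ_mul_norm hsS) (by simp [hB0]) (fun t ht => ?_) ?_
    (hF r (by rwa [hrnorm])) fun z hz => ?_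
  · exact TwoPointPositive.powSum_mul_pow (hBpos _ ⟨mul_pos (norm_pos_iff.2 hs0) ht.1,
      (mul_le_of_le_one_right (norm_nonneg s) ht.2).trans_lt hsS⟩) hs0
  · have : A 1 * r ^ 1 * (B 1 * s ^ 1) = A 1 * B 1 * (r * s) := by ring
    exact this ▸ mul_ne_zero hAB (mul_ne_zero hr0 hs0)
  · rw [powSum_mul_pow]
    exact hFK _ (by rwa [norm_mul, hz, hrnorm, mul_one])

end Convolution

section Starlike

variable {f p : ℂ → ℂ} {z ζ : ℂ} {R α r : ℝ}

/-- The logarithmic derivative `z f'(z) / f(z)` of a function with `f 0 = 0`, written so that the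
removable singularity at `0` is filled in. -/
noncomputable def starRatio (f : ℂ → ℂ) (z : ℂ) : ℂ := deriv f z / dslope f 0 z

/-- `f` is starlike of order `α` on the disk of radius `R` about `0`, vanishing at `0`. The
derivative at `0` is only required to be nonzero. -/
structure StarlikeOfOrder (α R : ℝ) (f : ℂ → ℂ) : Prop where
  differentiableOn : DifferentiableOn ℂ f (ball 0 R)
  map_zero : f 0 = 0
  dslope_ne_zero : ∀ z : ℂ, ‖z‖ < R → dslope f 0 z ≠ 0
  lt_re_starRatio : ∀ z : ℂ, ‖z‖ < R → α < (starRatio f z).re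

lemma dslope_zero_of_ne_zero (hf : f 0 = 0) (hz : z ≠ 0) : dslope f 0 z = f z / z := by
  rw [dslope_of_ne _ hz, slope_def_field, hf, sub_zero, sub_zero]

lemma starRatio_eq_mul_deriv_div (hf : f 0 = 0) (hz : z ≠ 0) :
    starRatio f z = z * deriv f z / f z := by
  rw [starRatio, dslope_zero_of_ne_zero hf hz, div_div_eq_mul_div, mul_comm]

lemma differentiableOn_starRatio (hf : DifferentiableOn ℂ f (ball 0 R))
    (hne : ∀ z : ℂ, ‖z‖ < R → dslope f 0 z ≠ 0) : DifferentiableOn ℂ (starRatio f) (ball 0 R) := by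
  rcases le_or_gt R 0 with hR | hR
  · rw [ball_eq_empty.2 hR]
    exact differentiableOn_empty
  · exact (hf.deriv isOpen_ball).div
      ((differentiableOn_dslope (ball_mem_nhds _ hR)).2 hf) fun z hz => hne z (by simpa using hz)

lemma exists_eq_mul_exp_ofReal_mul_I (hnorm : ‖z‖ = ‖ζ‖) (hne : z ≠ ζ) :
    ∃ δ ∈ Set.Ioo 0 (2 * Real.pi), z = ζ * exp (δ * I) := by
  have hζ : ζ ≠ 0 := by
    rintro rfl
    exact hne (norm_eq_zero.1 (hnorm.trans norm_zero))
  set δ := toIcoMod Real.two_pi_pos 0 (arg (z / ζ)) with hδ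
  have hmem : δ ∈ Set.Ico 0 (2 * Real.pi) := by
    simpa using toIcoMod_mem_Ico Real.two_pi_pos 0 (arg (z / ζ))
  have hexp : exp (δ * I) = exp (arg (z / ζ) * I) := by
    have := exp_mul_I_periodic.sub_zsmul_eq (x := (arg (z / ζ) : ℂ))
      (toIcoDiv Real.two_pi_pos 0 (arg (z / ζ)))
    rw [← this, hδ, toIcoMod]
    push_cast
    simp
  have heq : z = ζ * exp (δ * I) := by
    have hpolar := norm_mul_exp_arg_mul_I (z / ζ)
    rw [norm_div, hnorm, div_self (norm_ne_zero_iff.2 hζ), ofReal_one, one_mul, ← hexp] at hpolar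
    rw [hpolar, mul_div_cancel₀ _ hζ]
  refine ⟨δ, ⟨hmem.1.lt_of_ne fun h0 => hne ?_, hmem.2⟩, heq⟩
  rw [heq, ← h0, ofReal_zero, zero_mul, exp_zero, mul_one]

lemma eq_mul_exp_integral_of_hasDerivAt {y q : ℝ → ℂ} (hq : Continuous q)
    (hy : ∀ s, HasDerivAt y (q s * y s) s) (a b : ℝ) : y b = y a * exp (∫ s in a..b, q s) := by
  have hderiv (t : ℝ) : HasDerivAt (fun t => y t * exp (-∫ s in a..t, q s)) 0 t :=
    ((hy t).mul (hq.integral_hasStrictDerivAt a t).hasDerivAt.neg.cexp).congr_deriv (by ring)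
  have hconst := is_const_of_deriv_eq_zero (fun t => (hderiv t).differentiableAt)
    (fun t => (hderiv t).deriv) b a
  simp only [intervalIntegral.integral_same, neg_zero, exp_zero, mul_one, exp_neg] at hconst
  rw [← hconst, inv_mul_cancel_right₀ (exp_ne_zero _)]

lemma mul_sub_lt_re_integral {q : ℝ → ℂ} (hq : Continuous q) {c a b : ℝ} (hc : ∀ s, c < (q s).re)
    (hab : a < b) : c * (b - a) < (∫ s in a..b, q s).re := by
  have hre : (∫ s in a..b, q s).re = ∫ s in a..b, (q s).re :=
    (reCLM.intervalIntegral_comp_comm (hq.intervalIntegrable a b)).symm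
  have hconst : c * (b - a) = ∫ _ in a..b, c := by
    rw [intervalIntegral.integral_const, smul_eq_mul, mul_comm]
  rw [hre, hconst]
  exact intervalIntegral.integral_lt_integral_of_continuousOn_of_le_of_exists_lt hab
    continuousOn_const (continuous_re.comp hq).continuousOn (fun s _ => (hc s).le)
    ⟨a, Set.left_mem_Icc.2 hab.le, hc a⟩

lemma integral_mul_exp_ofReal_mul_I (hp : DifferentiableOn ℂ p (ball 0 R)) (hζ : ‖ζ‖ < R) :
    ∫ s in (0 : ℝ)..2 * Real.pi, p (ζ * exp (s * I)) = 2 * Real.pi * p 0 := by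
  have hscaled : DiffContOnCl ℂ (fun x => p (ζ * x)) (ball 0 |1|) := by
    refine DifferentiableOn.diffContOnCl (hp.comp (by fun_prop) fun x hx => ?_)
    rw [abs_one, closure_ball _ one_ne_zero, mem_closedBall_zero_iff] at hx
    rw [mem_ball_zero_iff, norm_mul]
    exact (mul_le_of_le_one_right (norm_nonneg _) hx).trans_lt hζ
  have havg := hscaled.circleAverage
  simp only [Real.circleAverage_def, circleMap, zero_add, ofReal_one, one_mul, mul_zero] at havg
  rw [← havg, real_smul]
  push_cast
  rw [mul_inv_cancel_left₀ (by simp [Real.pi_ne_zero])]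

lemma re_exp_neg_sub_one_mul_exp (δ : ℝ) (w : ℂ) :
    ((exp (-(δ * I)) - 1) * exp (I * w)).re =
      Real.exp (-w.im) * (2 * Real.sin (w.re - δ / 2) * Real.sin (δ / 2)) := by
  have hcos : Real.cos (w.re - δ) - Real.cos w.re =
      2 * Real.sin (w.re - δ / 2) * Real.sin (δ / 2) := by
    rw [show w.re - δ = (w.re - δ / 2) - δ / 2 by ring, Real.cos_sub]
    nth_rw 3 [show w.re = (w.re - δ / 2) + δ / 2 by ring]
    rw [Real.cos_add]
    ring
  rw [sub_mul, one_mul, ← exp_add, sub_re, exp_re, exp_re, ← hcos]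
  simp
  ring_nf

lemma starRatio_zero (hf : deriv f 0 ≠ 0) : starRatio f 0 = 1 := by
  rw [starRatio, dslope_same, div_self hf]

lemma norm_mul_exp_ofReal_mul_I (ζ : ℂ) (s : ℝ) : ‖ζ * exp (s * I)‖ = ‖ζ‖ := by
  rw [norm_mul, norm_exp_ofReal_mul_I, mul_one]

namespace StarlikeOfOrder

lemma deriv_zero_ne_zero (hf : StarlikeOfOrder α R f) (hR : 0 < R) : deriv f 0 ≠ 0 := by
  simpa using hf.dslope_ne_zero 0 (by simpa using hR)

lemma ne_zero (hf : StarlikeOfOrder α R f) (hz : ‖z‖ < R) (hz0 : z ≠ 0) : f z ≠ 0 := by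
  have hne := hf.dslope_ne_zero z hz
  rw [dslope_zero_of_ne_zero hf.map_zero hz0] at hne
  exact (div_ne_zero_iff.1 hne).1

lemma continuous_starRatio_circle (hf : StarlikeOfOrder α R f) (hζ : ‖ζ‖ < R) :
    Continuous fun s : ℝ => starRatio f (ζ * exp (s * I)) :=
  (differentiableOn_starRatio hf.differentiableOn hf.dslope_ne_zero).continuousOn.comp_continuous
    (by fun_prop) fun s => by simpa [norm_mul_exp_ofReal_mul_I] using hζ

lemma apply_mul_exp_ofReal_mul_I (hf : StarlikeOfOrder α R f) (hζ : ‖ζ‖ < R) (hζ0 : ζ ≠ 0)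
    (δ : ℝ) :
    f (ζ * exp (δ * I)) = f ζ * exp (I * ∫ s in (0 : ℝ)..δ, starRatio f (ζ * exp (s * I))) := by
  have hderiv (s : ℝ) : HasDerivAt (fun s : ℝ => f (ζ * exp (s * I)))
      (I * starRatio f (ζ * exp (s * I)) * f (ζ * exp (s * I))) s := by
    set z := ζ * exp (s * I) with hz
    have hz0 : z ≠ 0 := mul_ne_zero hζ0 (exp_ne_zero _)
    have hzR : ‖z‖ < R := by rwa [hz, norm_mul_exp_ofReal_mul_I]
    have hfz := (hf.differentiableOn.differentiableAt
      (isOpen_ball.mem_nhds (mem_ball_zero_iff.2 hzR))).hasDerivAt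
    have hcircle : HasDerivAt (fun t : ℂ => ζ * exp (t * I)) (z * I) s :=
      ((((hasDerivAt_id _).mul_const I).cexp).const_mul ζ).congr_deriv (by simp [hz, mul_assoc])
    refine (HasDerivAt.comp (s : ℂ) hfz hcircle).comp_ofReal.congr_deriv ?_
    rw [starRatio_eq_mul_deriv_div hf.map_zero hz0]
    have hfz0 := hf.ne_zero hzR hz0
    field_simp
  have hsolution := eq_mul_exp_integral_of_hasDerivAt
    (continuous_const.mul (hf.continuous_starRatio_circle hζ)) hderiv 0 δ
  simpa [intervalIntegral.integral_const_mul] using hsolution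

lemma re_integral_starRatio_mem_Ioo (hf : StarlikeOfOrder α R f) (hζ : ‖ζ‖ < R) {δ : ℝ}
    (hδ : δ ∈ Set.Ioo 0 (2 * Real.pi)) :
    (∫ s in (0 : ℝ)..δ, starRatio f (ζ * exp (s * I))).re ∈
      Set.Ioo (α * δ) (2 * Real.pi - α * (2 * Real.pi - δ)) := by
  have hq := hf.continuous_starRatio_circle hζ
  have hlt (s : ℝ) : α < (starRatio f (ζ * exp (s * I))).re :=
    hf.lt_re_starRatio _ (by rwa [norm_mul_exp_ofReal_mul_I])
  have hinitial := mul_sub_lt_re_integral hq hlt hδ.1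
  have hfinal := mul_sub_lt_re_integral hq hlt hδ.2
  have htotal := intervalIntegral.integral_add_adjacent_intervals
    (hq.intervalIntegrable (μ := MeasureTheory.volume) 0 δ)
    (hq.intervalIntegrable δ (2 * Real.pi))
  rw [integral_mul_exp_ofReal_mul_I
    (differentiableOn_starRatio hf.differentiableOn hf.dslope_ne_zero) hζ,
    starRatio_zero (hf.deriv_zero_ne_zero ((norm_nonneg ζ).trans_lt hζ)), mul_one] at htotal
  have hre := congrArg re htotal
  rw [add_re, ← ofReal_ofNat, ← ofReal_mul, ofReal_re] at hre
  rw [sub_zero] at hinitial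
  exact ⟨hinitial, by linarith⟩

lemma twoPointPositive (hf : StarlikeOfOrder (1 / 2) R f) (hr : r ∈ Set.Ioo 0 R) :
    TwoPointPositive f r := by
  intro z ζ hz hζ hne
  obtain ⟨δ, hδ, rfl⟩ := exists_eq_mul_exp_ofReal_mul_I (hz.trans hζ.symm) hne
  have hζ0 : ζ ≠ 0 := norm_pos_iff.1 (hζ ▸ hr.1)
  have hζR : ‖ζ‖ < R := hζ ▸ hr.2
  obtain ⟨hlower, hupper⟩ := hf.re_integral_starRatio_mem_Ioo hζR hδ
  rw [hf.apply_mul_exp_ofReal_mul_I hζR hζ0, mul_div_cancel_left₀ _ (hf.ne_zero hζR hζ0),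
    div_mul_cancel_left₀ hζ0, ← exp_neg, re_exp_neg_sub_one_mul_exp]
  have hsin₁ := Real.sin_pos_of_pos_of_lt_pi (x := δ / 2) (by linarith [hδ.1]) (by linarith [hδ.2])
  have hsin₂ := Real.sin_pos_of_pos_of_lt_pi
    (x := (∫ s in (0 : ℝ)..δ, starRatio f (ζ * exp (s * I))).re - δ / 2)
    (by linarith) (by linarith)
  positivity

end StarlikeOfOrder

end Starlike

section Jack

variable {ψ w : ℂ → ℂ} {d z₀ z₁ : ℂ} {R : ℝ}

lemma re_mul_sub_one_nonpos_of_norm_le_one (hψ : HasDerivAt ψ d 1)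
    (hle : ∀ b : ℂ, ‖b‖ ≤ 1 → ‖ψ b‖ ≤ 1) (h1 : ψ 1 = 1) {b : ℂ} (hb : ‖b‖ ≤ 1) :
    (d * (b - 1)).re ≤ 0 := by
  have hmax : IsLocalMaxOn (fun x => (ψ x).re) (closedBall 0 1) 1 :=
    IsMaxOn.localize fun x hx => by
      simpa [h1] using (re_le_norm _).trans (hle x (by simpa using hx))
  have hderiv := reCLM.hasFDerivAt.comp (1 : ℂ) (hψ.hasFDerivAt.restrictScalars ℝ)
  have hcone : b - 1 ∈ posTangentConeAt (closedBall (0 : ℂ) 1) 1 :=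
    sub_mem_posTangentConeAt_of_segment_subset
      ((convex_closedBall 0 1).segment_subset (by simp) (by simpa using hb))
  simpa [mul_comm d] using hmax.hasFDerivWithinAt_nonpos hderiv.hasFDerivWithinAt hcone

lemma eq_norm_of_hasDerivAt_one (hψ : HasDerivAt ψ d 1) (hle : ∀ b : ℂ, ‖b‖ ≤ 1 → ‖ψ b‖ ≤ 1)
    (h1 : ψ 1 = 1) : d = ‖d‖ := by
  have hnorm : ‖d‖ ≤ d.re := by
    have hconj : ‖(starRingEnd ℂ) d / ‖d‖‖ ≤ 1 := by simpa using div_self_le_one ‖d‖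
    have hre := re_mul_sub_one_nonpos_of_norm_le_one hψ hle h1 hconj
    rcases eq_or_ne d 0 with rfl | hd
    · simp
    · have hval : d * ((starRingEnd ℂ) d / ‖d‖ - 1) = ‖d‖ - d := by
        rw [mul_sub, mul_one, mul_div_assoc', mul_conj']
        field_simp
      rw [hval, sub_re, ofReal_re] at hre
      linarith
  exact eq_coe_norm_of_nonneg (re_eq_norm.1 (le_antisymm (re_le_norm d) hnorm))

lemma exists_norm_eq_one_of_one_le_norm (hw : DifferentiableOn ℂ w (ball 0 R)) (h0 : w 0 = 0)
    (hz₁ : ‖z₁‖ < R) (h1 : 1 ≤ ‖w z₁‖) :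
    ∃ z₀ : ℂ, ‖z₀‖ < R ∧ ‖w z₀‖ = 1 ∧ ∀ z : ℂ, ‖z‖ ≤ ‖z₀‖ → ‖w z‖ ≤ ‖z‖ / ‖z₀‖ := by
  have hcompact : IsCompact (closedBall (0 : ℂ) ‖z₁‖ ∩ (fun z => ‖w z‖) ⁻¹' Set.Ici 1) :=
    (isCompact_closedBall (0 : ℂ) ‖z₁‖).of_isClosed_subset
      ((hw.continuousOn.mono (closedBall_subset_ball hz₁)).norm.preimage_isClosed_of_isClosed
        isClosed_closedBall isClosed_Ici) Set.inter_subset_left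
  obtain ⟨z₀, ⟨hz₀, hwz₀ : 1 ≤ ‖w z₀‖⟩, hmin⟩ :=
    hcompact.exists_isMinOn ⟨z₁, by simp, h1⟩ continuous_norm.continuousOn
  rw [mem_closedBall_zero_iff] at hz₀
  have hz₀R : ‖z₀‖ < R := hz₀.trans_lt hz₁
  have hpos : 0 < ‖z₀‖ := by
    rw [norm_pos_iff]
    rintro rfl
    rw [h0, norm_zero] at hwz₀
    exact absurd hwz₀ (by norm_num)
  have hmaps : Set.MapsTo w (ball 0 ‖z₀‖) (closedBall (w 0) 1) := fun z hz => by
    rw [mem_ball_zero_iff] at hz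
    rw [h0, mem_closedBall_zero_iff]
    by_contra! hgt
    exact hz.not_ge (hmin ⟨mem_closedBall_zero_iff.2 (hz.le.trans hz₀), hgt.le⟩)
  have hschwarz : ∀ z ∈ ball (0 : ℂ) ‖z₀‖, ‖w z‖ ≤ ‖z‖ / ‖z₀‖ := fun z hz => by
    simpa [h0, div_eq_inv_mul] using dist_le_div_mul_dist_of_mapsTo_ball
      (hw.mono (ball_subset_ball hz₀R.le)) hmaps hz
  have hclosure : closure (ball (0 : ℂ) ‖z₀‖) = closedBall 0 ‖z₀‖ := closure_ball _ hpos.ne'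
  have hbound (z : ℂ) (hz : ‖z‖ ≤ ‖z₀‖) : ‖w z‖ ≤ ‖z‖ / ‖z₀‖ :=
    le_on_closure hschwarz (hclosure ▸ hw.continuousOn.norm.mono (closedBall_subset_ball hz₀R))
      (by fun_prop) (hclosure ▸ mem_closedBall_zero_iff.2 hz)
  exact ⟨z₀, hz₀R, le_antisymm ((hbound z₀ le_rfl).trans_eq (div_self hpos.ne')) hwz₀, hbound⟩

lemma exists_one_le_mul_deriv_eq (hw : DifferentiableAt ℂ w z₀) (h1 : ‖w z₀‖ = 1) (hz₀ : z₀ ≠ 0)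
    (hle : ∀ z : ℂ, ‖z‖ ≤ ‖z₀‖ → ‖w z‖ ≤ ‖z‖ / ‖z₀‖) :
    ∃ k : ℝ, 1 ≤ k ∧ z₀ * deriv w z₀ = k * w z₀ := by
  have hwz₀ : w z₀ ≠ 0 := norm_ne_zero_iff.1 (h1 ▸ one_ne_zero)
  set d := z₀ * deriv w z₀ / w z₀ - 1 with hd
  have hderiv : HasDerivAt (fun b => w (z₀ * b) / (w z₀ * b)) d 1 := by
    have hcomp : HasDerivAt (fun b => w (z₀ * b)) (deriv w z₀ * z₀) 1 :=
      HasDerivAt.comp (1 : ℂ) (by simpa using hw.hasDerivAt)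
        (by simpa using (hasDerivAt_id (1 : ℂ)).const_mul z₀)
    refine (hcomp.div ((hasDerivAt_id (1 : ℂ)).const_mul (w z₀)) (by simpa)).congr_deriv ?_
    simp only [id_eq, mul_one, hd]
    field_simp
  have hnorm := eq_norm_of_hasDerivAt_one hderiv (fun b hb => ?_) (by simp [hwz₀])
  · refine ⟨‖d‖ + 1, by simp, ?_⟩
    rw [ofReal_add, ← hnorm, hd]
    field_simp
    simp
  · have hb' := hle (z₀ * b) (by rw [norm_mul]; exact mul_le_of_le_one_right (norm_nonneg _) hb)
    rw [norm_mul, mul_div_cancel_left₀ _ (norm_ne_zero_iff.2 hz₀)] at hb'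
    rw [norm_div, norm_mul, h1, one_mul]
    exact div_le_one_of_le₀ hb' (norm_nonneg b)

/-- Jack's lemma. -/
theorem exists_norm_eq_one_and_mul_deriv_eq (hw : DifferentiableOn ℂ w (ball 0 R)) (h0 : w 0 = 0)
    (hz₁ : ‖z₁‖ < R) (h1 : 1 ≤ ‖w z₁‖) :
    ∃ z₀ : ℂ, ‖z₀‖ < R ∧ ‖w z₀‖ = 1 ∧ ∃ k : ℝ, 1 ≤ k ∧ z₀ * deriv w z₀ = k * w z₀ := by
  obtain ⟨z₀, hz₀, hwz₀, hle⟩ := exists_norm_eq_one_of_one_le_norm hw h0 hz₁ h1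
  have hne : z₀ ≠ 0 := by
    rintro rfl
    simp [h0] at hwz₀
  have hdiff := hw.differentiableAt (isOpen_ball.mem_nhds (mem_ball_zero_iff.2 hz₀))
  exact ⟨z₀, hz₀, hwz₀, exists_one_le_mul_deriv_eq hdiff hwz₀ hne hle⟩

end Jack

section MarxStrohhacker

variable {g : ℂ → ℂ} {z : ℂ} {R : ℝ}

lemma not_re_pos_of_one_sub_mul_eq {w x : ℂ} {k : ℝ} (hw : ‖w‖ = 1) (hk : 1 ≤ k)
    (h : (1 - w) * x = 1 + k * w) : ¬0 < x.re := by
  intro hx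
  have hunit : w.re ^ 2 + w.im ^ 2 = 1 := by
    rw [pow_two, pow_two, ← normSq_apply, normSq_eq_norm_sq, hw, one_pow]
  have hw1 : 1 - w ≠ 0 := by
    intro h0
    rw [h0, zero_mul, ← sub_eq_zero.1 h0, mul_one] at h
    norm_cast at h
    linarith
  have hconj : normSq (1 - w) * x = (1 + k * w) * (starRingEnd ℂ) (1 - w) := by
    rw [← h, ← mul_conj]
    ring
  have hre : normSq (1 - w) * x.re = (1 - k) * (1 - w.re) := by
    have hre' := congrArg re hconj
    simp only [mul_re, add_re, add_im, mul_im, ofReal_re, ofReal_im, conj_re, conj_im, sub_re,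
      sub_im, one_re, one_im] at hre'
    linear_combination hre' - k * hunit
  nlinarith [mul_pos (normSq_pos.2 hw1) hx, hw ▸ re_le_norm w]

lemma ne_zero_and_half_lt_re_inv_of_norm_one_sub_lt_one {u : ℂ} (hu : ‖1 - u‖ < 1) :
    u ≠ 0 ∧ 1 / 2 < (u⁻¹).re := by
  have hu0 : u ≠ 0 := by
    rintro rfl
    simp at hu
  have hsq : ‖1 - u‖ ^ 2 < 1 := pow_lt_one₀ (norm_nonneg _) hu two_ne_zero
  rw [Complex.sq_norm, normSq_apply, sub_re, sub_im, one_re, one_im] at hsq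
  refine ⟨hu0, ?_⟩
  rw [inv_re, lt_div_iff₀ (normSq_pos.2 hu0), normSq_apply]
  linarith

lemma one_sub_mul_one_add_eq_of_eventuallyEq {w : ℂ → ℂ} (hg : DifferentiableAt ℂ g z)
    (hg' : DifferentiableAt ℂ (deriv g) z) (hw : DifferentiableAt ℂ w z) (hne : deriv g z ≠ 0)
    (heq : g =ᶠ[nhds z] fun y => y * deriv g y * (1 - w y)) :
    (1 - w z) * (1 + z * deriv (deriv g) z / deriv g z) = 1 + z * deriv w z := by
  have hderiv := hg.hasDerivAt.unique
    ((((hasDerivAt_id z).mul hg'.hasDerivAt).mul (hw.hasDerivAt.const_sub 1)).congr_of_eventuallyEq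
      heq)
  simp only [id_eq, one_mul, Pi.mul_apply] at hderiv
  field_simp
  linear_combination -hderiv

lemma norm_one_sub_dslope_div_deriv_lt_one (hg : DifferentiableOn ℂ g (ball 0 R)) (hg0 : g 0 = 0)
    (hne : ∀ z : ℂ, ‖z‖ < R → deriv g z ≠ 0)
    (hconv : ∀ z : ℂ, ‖z‖ < R → 0 < (1 + z * deriv (deriv g) z / deriv g z).re) (hz : ‖z‖ < R) :
    ‖1 - dslope g 0 z / deriv g z‖ < 1 := by
  have hR : 0 < R := (norm_nonneg z).trans_lt hz
  have hg' : DifferentiableOn ℂ (deriv g) (ball 0 R) := hg.deriv isOpen_ball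
  set w : ℂ → ℂ := fun y => 1 - dslope g 0 y / deriv g y with hw_def
  have hw : DifferentiableOn ℂ w (ball 0 R) :=
    (((differentiableOn_dslope (ball_mem_nhds _ hR)).2 hg).div hg' fun y hy =>
      hne y (by simpa using hy)).const_sub 1
  have hw0 : w 0 = 0 := by simp [hw_def, hne 0 (by simpa using hR)]
  by_contra! hnorm
  obtain ⟨y, hy, hwy, k, hk, hkw⟩ := exists_norm_eq_one_and_mul_deriv_eq hw hw0 hz hnorm
  have hmem : ball (0 : ℂ) R ∈ nhds y := isOpen_ball.mem_nhds (by simpa using hy)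
  have heq : g =ᶠ[nhds y] fun x => x * deriv g x * (1 - w x) := by
    filter_upwards [hmem] with x hx
    have hslope : x * dslope g 0 x = g x := by simpa [hg0] using sub_smul_dslope g 0 x
    rw [hw_def, sub_sub_cancel, mul_assoc, mul_div_cancel₀ _ (hne x (by simpa using hx)), hslope]
  refine not_re_pos_of_one_sub_mul_eq hwy hk ?_ (hconv y hy)
  rw [← hkw]
  exact one_sub_mul_one_add_eq_of_eventuallyEq (hg.differentiableAt hmem)
    (hg'.differentiableAt hmem) (hw.differentiableAt hmem) (hne y hy) heq

/-- The Marx–Strohhäcker theorem. -/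
theorem starlikeOfOrder_half_of_re_pos (hg : DifferentiableOn ℂ g (ball 0 R)) (hg0 : g 0 = 0)
    (hne : ∀ z : ℂ, ‖z‖ < R → deriv g z ≠ 0)
    (hconv : ∀ z : ℂ, ‖z‖ < R → 0 < (1 + z * deriv (deriv g) z / deriv g z).re) :
    StarlikeOfOrder (1 / 2) R g := by
  have hslope (z : ℂ) (hz : ‖z‖ < R) := ne_zero_and_half_lt_re_inv_of_norm_one_sub_lt_one
    (norm_one_sub_dslope_div_deriv_lt_one hg hg0 hne hconv hz)
  refine ⟨hg, hg0, fun z hz => (div_ne_zero_iff.1 (hslope z hz).1).1, fun z hz => ?_⟩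
  rw [starRatio, ← inv_div (dslope g 0 z)]
  exact (hslope z hz).2

end MarxStrohhacker

section Cardioid

variable {s u w z : ℂ} {p : ℂ → ℂ} {r : ℝ}

/-- The map `u ↦ 1 + u + u² / 2`, which sends the unit disk onto the cardioid domain
`omegaCar`. -/
noncomputable def cardioidMap (u : ℂ) : ℂ := 1 + u + u ^ 2 / 2

lemma omegaCar_eq_image_cardioidMap : omegaCar = cardioidMap '' ball 0 1 := by
  ext w
  simp only [omegaCar, cardioidMap, Set.mem_ofPred_eq, Set.mem_image, mem_ball_zero_iff, eq_comm]

lemma image_cardioidMap_closedBall_subset_omegaCar (hr : r < 1) :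
    cardioidMap '' closedBall 0 r ⊆ omegaCar := by
  rw [omegaCar_eq_image_cardioidMap]
  exact Set.image_mono (closedBall_subset_ball hr)

lemma two_mul_cardioidMap_sub_one (u : ℂ) : 2 * cardioidMap u - 1 = (1 + u) ^ 2 := by
  rw [cardioidMap]
  ring

lemma isClosed_image_cardioidMap_closedBall (r : ℝ) : IsClosed (cardioidMap '' closedBall 0 r) := by
  have hcont : Continuous cardioidMap := by
    unfold cardioidMap
    fun_prop
  exact ((isCompact_closedBall 0 r).image hcont).isClosed

lemma exists_pow_two_eq_and_re_nonneg (w : ℂ) : ∃ s : ℂ, s ^ 2 = w ∧ 0 ≤ s.re := by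
  obtain ⟨s, hs⟩ := IsAlgClosed.exists_pow_nat_eq w two_pos
  rcases le_total 0 s.re with hre | hre
  · exact ⟨s, hs, hre⟩
  · exact ⟨-s, by rwa [neg_sq], by simpa using hre⟩

lemma norm_sub_one_le_iff (hs : 0 ≤ s.re) (hr0 : 0 ≤ r) (hr1 : r ≤ 1) :
    ‖s - 1‖ ≤ r ↔ (‖s ^ 2‖ - r ^ 2) ^ 2 + (1 - 2 * r ^ 2) ≤ 2 * (s ^ 2).re := by
  have hr2 : r ^ 2 ≤ 1 := pow_le_one₀ hr0 hr1
  have hnorm : ‖s‖ ^ 2 = s.re ^ 2 + s.im ^ 2 := by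
    rw [Complex.sq_norm, normSq_apply, pow_two, pow_two]
  have hsub : ‖s - 1‖ ^ 2 = ‖s‖ ^ 2 - 2 * s.re + 1 := by
    rw [hnorm, Complex.sq_norm, normSq_apply, sub_re, sub_im, one_re, one_im]
    ring
  have hre : (s ^ 2).re = s.re ^ 2 - s.im ^ 2 := by
    rw [pow_two, mul_re, pow_two, pow_two]
  have hsq : ‖s - 1‖ ≤ r ↔ ‖s‖ ^ 2 + (1 - r ^ 2) ≤ 2 * s.re := by
    rw [← sq_le_sq₀ (norm_nonneg _) hr0, hsub]
    constructor <;> intro h <;> linarith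
  rw [hsq, ← sq_le_sq₀ (by nlinarith [sq_nonneg ‖s‖]) (by linarith), norm_pow, hre, hnorm]
  constructor <;> intro h <;> linarith

lemma mem_image_cardioidMap_closedBall_iff (hr0 : 0 ≤ r) (hr1 : r ≤ 1) :
    w ∈ cardioidMap '' closedBall 0 r ↔
      (‖2 * w - 1‖ - r ^ 2) ^ 2 + (1 - 2 * r ^ 2) ≤ 2 * (2 * w - 1).re := by
  constructor
  · rintro ⟨u, hu, rfl⟩
    rw [mem_closedBall_zero_iff] at hu
    have hre : 0 ≤ (1 + u).re := by
      rw [add_re, one_re]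
      linarith [neg_le_of_abs_le ((abs_re_le_norm u).trans hu)]
    rw [two_mul_cardioidMap_sub_one, ← norm_sub_one_le_iff hre hr0 hr1, add_sub_cancel_left]
    exact hu
  · obtain ⟨s, hs, hre⟩ := exists_pow_two_eq_and_re_nonneg (2 * w - 1)
    rw [← hs, ← norm_sub_one_le_iff hre hr0 hr1]
    refine fun h => ⟨s - 1, mem_closedBall_zero_iff.2 h, ?_⟩
    rw [cardioidMap]
    linear_combination hs / 2

lemma convex_setOf_sq_norm_sub_add_le {c d : ℝ} (hcd : 2 * c ≤ d) :
    Convex ℝ {w : ℂ | (‖w‖ - c) ^ 2 + d ≤ 2 * w.re} := by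
  intro x hx y hy a b ha hb hab
  rw [Set.mem_ofPred_eq] at hx hy ⊢
  have hre : (a • x + b • y).re = a * x.re + b * y.re := by simp
  have hlower : c ≤ ‖a • x + b • y‖ := by
    refine le_trans ?_ (re_le_norm _)
    rw [hre]
    have hx' : c ≤ x.re := by linarith [sq_nonneg (‖x‖ - c)]
    have hy' : c ≤ y.re := by linarith [sq_nonneg (‖y‖ - c)]
    exact (convex_Ici c) hx' hy' ha hb hab
  have hupper : ‖a • x + b • y‖ ≤ a * ‖x‖ + b * ‖y‖ :=
    convexOn_univ_norm.2 (Set.mem_univ x) (Set.mem_univ y) ha hb hab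
  have hjensen : (a * (‖x‖ - c) + b * (‖y‖ - c)) ^ 2 ≤ a * (‖x‖ - c) ^ 2 + b * (‖y‖ - c) ^ 2 :=
    even_two.convexOn_pow.2 (Set.mem_univ _) (Set.mem_univ _) ha hb hab
  calc (‖a • x + b • y‖ - c) ^ 2 + d ≤ (a * ‖x‖ + b * ‖y‖ - c) ^ 2 + d := by gcongr
    _ = (a * (‖x‖ - c) + b * (‖y‖ - c)) ^ 2 + (a + b) * d := by
      rw [hab]
      linear_combination (a * (‖x‖ - c) + b * (‖y‖ - c) + (a * ‖x‖ + b * ‖y‖ - c)) * c * hab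
    _ ≤ a * (‖x‖ - c) ^ 2 + b * (‖y‖ - c) ^ 2 + (a + b) * d := by gcongr
    _ = a * ((‖x‖ - c) ^ 2 + d) + b * ((‖y‖ - c) ^ 2 + d) := by ring
    _ ≤ a * (2 * x.re) + b * (2 * y.re) := by gcongr
    _ = 2 * (a • x + b • y).re := by rw [hre]; ring

lemma convex_image_cardioidMap_closedBall (hr0 : 0 ≤ r) (hr : r ≤ 1 / 2) :
    Convex ℝ (cardioidMap '' closedBall 0 r) := by
  have hset : cardioidMap '' closedBall 0 r = AffineMap.homothety (1 : ℂ) (2 : ℝ) ⁻¹'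
      {w : ℂ | (‖w‖ - r ^ 2) ^ 2 + (1 - 2 * r ^ 2) ≤ 2 * w.re} := by
    ext w
    have hw : AffineMap.homothety (1 : ℂ) (2 : ℝ) w = 2 * w - 1 := by
      rw [AffineMap.homothety_apply, vsub_eq_sub, vadd_eq_add, real_smul, ofReal_ofNat]
      ring
    rw [mem_image_cardioidMap_closedBall_iff hr0 (by linarith), Set.mem_preimage, hw,
      Set.mem_ofPred_eq]
  rw [hset]
  exact (convex_setOf_sq_norm_sub_add_le (by nlinarith)).affine_preimage _

lemma half_lt_re_of_mem_image_cardioidMap (hr0 : 0 ≤ r) (hr : r ≤ 1 / 2)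
    (hw : w ∈ cardioidMap '' closedBall 0 r) : 1 / 2 < w.re := by
  rw [mem_image_cardioidMap_closedBall_iff hr0 (by linarith), sub_re, mul_re, re_ofNat,
    im_ofNat, zero_mul, sub_zero, one_re] at hw
  nlinarith [sq_nonneg (‖2 * w - 1‖ - r ^ 2)]

lemma sq_mem_slitPlane (hs : 0 < s.re) : s ^ 2 ∈ slitPlane := by
  rw [mem_slitPlane_iff, pow_two, mul_re, mul_im]
  by_cases him : s.im = 0
  · left
    rw [him, mul_zero, sub_zero]
    positivity
  · right
    rw [mul_comm s.im, ← two_mul]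
    positivity

lemma one_add_re_pos (hu : ‖u‖ < 1) : 0 < (1 + u).re := by
  rw [add_re, one_re]
  linarith [neg_lt_of_abs_lt ((abs_re_le_norm u).trans_lt hu)]

lemma mem_image_cardioidMap_closedBall_norm (hp : DifferentiableOn ℂ p (ball 0 1)) (hp0 : p 0 = 1)
    (hmaps : Set.MapsTo p (ball 0 1) omegaCar) (hz : ‖z‖ < 1) :
    p z ∈ cardioidMap '' closedBall 0 ‖z‖ := by
  rw [omegaCar_eq_image_cardioidMap] at hmaps
  have hinv {y u : ℂ} (hu : ‖u‖ < 1) (hy : cardioidMap u = p y) :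
      (2 * p y - 1) ^ (2⁻¹ : ℂ) - 1 = u := by
    rw [← hy, two_mul_cardioidMap_sub_one, sq_cpow_two_inv (one_add_re_pos hu),
      add_sub_cancel_left]
  have hdiff : DifferentiableOn ℂ (fun y => (2 * p y - 1) ^ (2⁻¹ : ℂ) - 1) (ball 0 1) := by
    refine (((hp.const_mul 2).sub_const 1).cpow_const fun y hy => ?_).sub_const 1
    obtain ⟨u, hu, hy⟩ := hmaps hy
    rw [← hy, two_mul_cardioidMap_sub_one]
    exact sq_mem_slitPlane (one_add_re_pos (mem_ball_zero_iff.1 hu))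
  have hball : Set.MapsTo (fun y => (2 * p y - 1) ^ (2⁻¹ : ℂ) - 1) (ball 0 1) (closedBall 0 1) := by
    intro y hy
    obtain ⟨u, hu, hy⟩ := hmaps hy
    rw [mem_ball_zero_iff] at hu
    simpa only [hinv hu hy, mem_closedBall_zero_iff] using hu.le
  obtain ⟨u, hu, hpz⟩ := hmaps (mem_ball_zero_iff.2 hz)
  have hschwarz := norm_le_norm_of_mapsTo_ball hdiff hball (by norm_num [hp0]) hz
  rw [hinv (mem_ball_zero_iff.1 hu) hpz] at hschwarz
  exact ⟨u, mem_closedBall_zero_iff.2 hschwarz, hpz⟩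

end Cardioid

section HadamardProduct

variable {A B F : ℕ → ℂ} {f g : ℂ → ℂ} {K : Set ℂ} {v z : ℂ} {R S α : ℝ}

lemma eqOn_dslope_zero (hR : 0 < R) (h : Set.EqOn f g (ball 0 R)) :
    Set.EqOn (dslope f 0) (dslope g 0) (ball 0 R) := by
  intro z hz
  rcases eq_or_ne z 0 with rfl | hz0
  · rw [dslope_same, dslope_same, h.deriv isOpen_ball hz]
  · rw [dslope_of_ne _ hz0, dslope_of_ne _ hz0, slope_def_field, slope_def_field, h hz,
      h (mem_ball_self hR)]

lemma eqOn_starRatio (hR : 0 < R) (h : Set.EqOn f g (ball 0 R)) :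
    Set.EqOn (starRatio f) (starRatio g) (ball 0 R) := fun z hz => by
  rw [starRatio, starRatio, h.deriv isOpen_ball hz, eqOn_dslope_zero hR h hz]

namespace StarlikeOfOrder

lemma congr (hf : StarlikeOfOrder α R f) (hR : 0 < R) (h : Set.EqOn f g (ball 0 R)) :
    StarlikeOfOrder α R g where
  differentiableOn := hf.differentiableOn.congr h.symm
  map_zero := by rw [← h (mem_ball_self hR), hf.map_zero]
  dslope_ne_zero z hz := by
    rw [← eqOn_dslope_zero hR h (mem_ball_zero_iff.2 hz)]
    exact hf.dslope_ne_zero z hz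
  lt_re_starRatio z hz := by
    rw [← eqOn_starRatio hR h (mem_ball_zero_iff.2 hz)]
    exact hf.lt_re_starRatio z hz

lemma convergesOnBall (hA : StarlikeOfOrder α R (powSum A)) : ConvergesOnBall A R :=
  .of_powSum_ne_zero fun _ hz hz0 => hA.ne_zero hz hz0

lemma starRatio_mul_self (hf : StarlikeOfOrder α R f) (hz : ‖z‖ < R) :
    starRatio f z * f z = z * deriv f z := by
  have hslope : z * dslope f 0 z = f z := by simpa [hf.map_zero] using sub_smul_dslope f 0 z
  rw [starRatio, ← hslope, mul_left_comm, div_mul_cancel₀ _ (hf.dslope_ne_zero z hz)]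

lemma natCast_mul_eq_cauchyProduct (hA : StarlikeOfOrder α R (powSum A)) (hR : 0 < R)
    (hF : ConvergesOnBall F R) (hstar : Set.EqOn (starRatio (powSum A)) (powSum F) (ball 0 R)) :
    (fun n => n * A n) = cauchyProduct F A := by
  obtain ⟨r, hr0, hrR⟩ := NormedField.exists_norm_lt ℂ hR
  have hAr := hA.convergesOnBall r hrR
  have hFr := hF r hrR
  have hderiv : Summable fun n => n * A n * r ^ n := by
    refine (hA.convergesOnBall.summable_succ_mul_norm hrR).of_norm_bounded fun n => ?_
    rw [mul_assoc, norm_mul, norm_natCast]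
    gcongr
    exact le_add_of_nonneg_right zero_le_one
  have hscaled := eq_of_eqOn_powSum_sphere hderiv (summable_cauchyProduct hFr hAr) fun z hz => by
    have hrz : ‖r * z‖ < R := by rwa [norm_mul, hz, mul_one]
    rw [powSum_cauchyProduct hFr hAr hz.le, powSum_mul_pow, powSum_mul_pow, powSum_mul_pow,
      ← hA.convergesOnBall.mul_deriv_powSum hrz, ← hstar (mem_ball_zero_iff.2 hrz),
      hA.starRatio_mul_self hrz]
  funext n
  have hn := congrFun hscaled n
  rw [cauchyProduct_mul_pow] at hn
  exact mul_right_cancel₀ (pow_ne_zero n (norm_pos_iff.1 hr0)) hn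

end StarlikeOfOrder

theorem powSum_mul_starRatio_mem_of_convex (hconv : Convex ℝ K) (hclosed : IsClosed K)
    (hR : 0 < R) (hS : 0 < S) (hA : StarlikeOfOrder (1 / 2) R (powSum A))
    (hB : StarlikeOfOrder (1 / 2) S (powSum B))
    (hK : ∀ z : ℂ, ‖z‖ < R → starRatio (powSum A) z ∈ K) (hv0 : v ≠ 0) (hv : ‖v‖ < R * S) :
    powSum (fun n => A n * B n) v ≠ 0 ∧
      powSum (fun n => n * (A n * B n)) v / powSum (fun n => A n * B n) v ∈ K := by
  obtain ⟨F, hF, hstar⟩ := exists_eqOn_powSum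
    (differentiableOn_starRatio hA.differentiableOn hA.dslope_ne_zero)
  have hAB : A 1 * B 1 ≠ 0 := by
    rw [← hA.convergesOnBall.deriv_powSum_zero hR, ← hB.convergesOnBall.deriv_powSum_zero hS]
    exact mul_ne_zero (hA.deriv_zero_ne_zero hR) (hB.deriv_zero_ne_zero hS)
  have hcoeff : (fun n => n * (A n * B n)) = fun n => cauchyProduct F A n * B n := by
    funext n
    rw [← hA.natCast_mul_eq_cauchyProduct hR hF hstar, mul_assoc]
  rw [hcoeff]
  refine powSum_cauchyProduct_mul_div_mem_of_convex hconv hclosed hS hA.convergesOnBall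
    (by rw [← powSum_zero A, hA.map_zero]) (fun r hr => hA.twoPointPositive hr) hB.convergesOnBall
    (by rw [← powSum_zero B, hB.map_zero]) (fun r hr => hB.twoPointPositive hr) hAB hF
    (fun z hz => ?_) hv0 hv
  rw [← hstar (mem_ball_zero_iff.2 hz)]
  exact hK z hz

end HadamardProduct

section CardioidStarlike

variable {f p : ℂ → ℂ} {z : ℂ} {ρ : ℝ}

namespace SCar

lemma differentiableOn (hf : SCar f) : DifferentiableOn ℂ f (ball 0 1) := hf.1

lemma map_zero (hf : SCar f) : f 0 = 0 := hf.2.1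

lemma deriv_zero (hf : SCar f) : deriv f 0 = 1 := hf.2.2.1

lemma ne_zero (hf : SCar f) (hz : ‖z‖ < 1) (hz0 : z ≠ 0) : f z ≠ 0 := hf.2.2.2.1 z hz hz0

lemma mul_deriv_div_mem_omegaCar (hf : SCar f) (hz : ‖z‖ < 1) (hz0 : z ≠ 0) :
    z * deriv f z / f z ∈ omegaCar := hf.2.2.2.2 z hz hz0

lemma dslope_ne_zero (hf : SCar f) (hz : ‖z‖ < 1) : dslope f 0 z ≠ 0 := by
  rcases eq_or_ne z 0 with rfl | hz0
  · rw [dslope_same, hf.deriv_zero]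
    exact one_ne_zero
  · rw [dslope_zero_of_ne_zero hf.map_zero hz0]
    exact div_ne_zero (hf.ne_zero hz hz0) hz0

lemma starRatio_mem_omegaCar (hf : SCar f) (hz : ‖z‖ < 1) : starRatio f z ∈ omegaCar := by
  rcases eq_or_ne z 0 with rfl | hz0
  · exact ⟨0, by simp, by simp [starRatio_zero, hf.deriv_zero]⟩
  · rw [starRatio_eq_mul_deriv_div hf.map_zero hz0]
    exact hf.mul_deriv_div_mem_omegaCar hz hz0

lemma starRatio_mem_image_cardioidMap (hf : SCar f) (hz : ‖z‖ ≤ 1 / 2) :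
    starRatio f z ∈ cardioidMap '' closedBall 0 (1 / 2) := by
  refine Set.image_mono (closedBall_subset_closedBall hz) <|
    mem_image_cardioidMap_closedBall_norm
      (differentiableOn_starRatio hf.differentiableOn fun y hy => hf.dslope_ne_zero hy)
      (starRatio_zero (by simp [hf.deriv_zero]))
      (fun y hy => hf.starRatio_mem_omegaCar (mem_ball_zero_iff.1 hy)) (by linarith)

lemma starlikeOfOrder_half (hf : SCar f) : StarlikeOfOrder (1 / 2) (1 / 2) f where
  differentiableOn := hf.differentiableOn.mono (ball_subset_ball (by norm_num))
  map_zero := hf.map_zero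
  dslope_ne_zero z hz := hf.dslope_ne_zero (by linarith)
  lt_re_starRatio z hz := half_lt_re_of_mem_image_cardioidMap (by norm_num) le_rfl
    (hf.starRatio_mem_image_cardioidMap hz.le)

end SCar

lemma sCar_comp_mul_div (hρ : 0 < ρ) (hp : DifferentiableOn ℂ p (ball 0 ρ)) (hp0 : p 0 = 0)
    (hp1 : deriv p 0 = 1) (hne : ∀ z : ℂ, ‖z‖ < ρ → z ≠ 0 → p z ≠ 0)
    (hmem : ∀ z : ℂ, ‖z‖ < ρ → z ≠ 0 → z * deriv p z / p z ∈ omegaCar) :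
    SCar fun z => p (ρ * z) / ρ := by
  have hρ0 : (ρ : ℂ) ≠ 0 := ofReal_ne_zero.2 hρ.ne'
  have hnorm {z : ℂ} (hz : ‖z‖ < 1) : ‖ρ * z‖ < ρ := by
    rw [norm_mul, norm_real, Real.norm_of_nonneg hρ.le]
    exact mul_lt_of_lt_one_right hρ hz
  have hderiv (z : ℂ) : deriv (fun z => p (ρ * z) / ρ) z = deriv p (ρ * z) := by
    rw [deriv_div_const, deriv_comp_mul_left, smul_eq_mul, mul_div_cancel_left₀ _ hρ0]
  refine ⟨?_, by simp [hp0], by rw [hderiv, mul_zero, hp1], fun z hz hz0 => ?_, fun z hz hz0 => ?_⟩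
  · refine (hp.comp (by fun_prop) fun z hz => ?_).div_const _
    exact mem_ball_zero_iff.2 (hnorm (mem_ball_zero_iff.1 hz))
  · exact div_ne_zero (hne _ (hnorm hz) (mul_ne_zero hρ0 hz0)) hρ0
  · rw [hderiv, div_div_eq_mul_div, mul_right_comm, mul_comm z]
    exact hmem _ (hnorm hz) (mul_ne_zero hρ0 hz0)

end CardioidStarlike

theorem stmt_3_general (f g : ℂ → ℂ) (a b : ℕ → ℂ) (hf : SCar f)
    (hfa : ∀ z : ℂ, ‖z‖ < 1 → f z = ∑' n : ℕ, a n * z ^ n) (hg : StarlikeOfOrder (1 / 2) 1 g)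
    (hg1 : deriv g 0 = 1) (hgb : ∀ z : ℂ, ‖z‖ < 1 → g z = ∑' n : ℕ, b n * z ^ n) (ρ : ℝ)
    (hρ0 : 0 < ρ) (hρ : ρ ≤ 1 / 2) :
    SCar (fun z : ℂ => (∑' n : ℕ, a n * b n * ((ρ : ℂ) * z) ^ n) / (ρ : ℂ)) := by
  have hfA : Set.EqOn f (powSum a) (ball 0 (1 / 2)) := fun z hz =>
    hfa z ((mem_ball_zero_iff.1 hz).trans (by norm_num))
  have hgB : Set.EqOn g (powSum b) (ball 0 1) := fun z hz => hgb z (mem_ball_zero_iff.1 hz)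
  have hA := hf.starlikeOfOrder_half.congr (by norm_num) hfA
  have hB := hg.congr one_pos hgB
  have hproduct (v : ℂ) (hv : ‖v‖ < ρ) (hv0 : v ≠ 0) := powSum_mul_starRatio_mem_of_convex
    (convex_image_cardioidMap_closedBall (by norm_num) le_rfl)
    (isClosed_image_cardioidMap_closedBall (1 / 2)) (by norm_num) one_pos hA hB
    (fun z hz => eqOn_starRatio (by norm_num) hfA (mem_ball_zero_iff.2 hz) ▸
      hf.starRatio_mem_image_cardioidMap hz.le) hv0 (by linarith)
  have hconv : ConvergesOnBall (fun n => a n * b n) ρ :=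
    .of_powSum_ne_zero fun v hv hv0 => (hproduct v hv hv0).1
  refine sCar_comp_mul_div hρ0 hconv.differentiableOn_powSum ?_ ?_
    (fun v hv hv0 => (hproduct v hv hv0).1) fun v hv hv0 => ?_
  · rw [powSum_zero, ← powSum_zero a, hA.map_zero, zero_mul]
  · rw [hconv.deriv_powSum_zero hρ0, ← hA.convergesOnBall.deriv_powSum_zero (by norm_num),
      ← hB.convergesOnBall.deriv_powSum_zero one_pos,
      ← hfA.deriv isOpen_ball (mem_ball_self (by norm_num)),
      ← hgB.deriv isOpen_ball (mem_ball_self one_pos), hf.deriv_zero, hg1, one_mul]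
  · rw [hconv.mul_deriv_powSum hv]
    exact image_cardioidMap_closedBall_subset_omegaCar (by norm_num) (hproduct v hv hv0).2

theorem stmt_3 (f g : ℂ → ℂ) (a b : ℕ → ℂ)
    (hf : SCar f)
    (hfa : ∀ z : ℂ, ‖z‖ < 1 → f z = ∑' n : ℕ, a n * z ^ n)
    (ha0 : a 0 = 0) (ha1 : a 1 = 1)
    (hgd : DifferentiableOn ℂ g (Metric.ball (0 : ℂ) 1))
    (hg0 : g 0 = 0) (hg1 : deriv g 0 = 1)
    (hgconv : ∀ z : ℂ, ‖z‖ < 1 → deriv g z ≠ 0 ∧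
      0 < (1 + z * deriv (deriv g) z / deriv g z).re)
    (hgb : ∀ z : ℂ, ‖z‖ < 1 → g z = ∑' n : ℕ, b n * z ^ n)
    (hb0 : b 0 = 0) (hb1 : b 1 = 1)
    (ρ : ℝ) (hρ0 : 0 < ρ) (hρ : ρ ≤ 1 / 2) :
    SCar (fun z : ℂ => (∑' n : ℕ, a n * b n * ((ρ : ℂ) * z) ^ n) / (ρ : ℂ)) :=
  stmt_3_general f g a b hf hfa (starlikeOfOrder_half_of_re_pos hgd hg0
    (fun z hz => (hgconv z hz).1) fun z hz => (hgconv z hz).2) hg1 hgb ρ hρ0 hρ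
end

section
/- Let k ≥ 5/3 and let f be analytic on 𝔻 with f(0) = 0, f'(0) = 1, f(z) ≠ 0 on 𝔻 \ {0}, and suppose Re(z f'(z)/f(z)) > k·|z f'(z)/f(z) − 1| for every z ∈ 𝔻 \ {0} (i.e. f is k-starlike). Then f ∈ S*_car; that is, k-S* ⊂ S*_car for all k ≥ 5/3. -/
open Complex Metric

/-!
If `w = 1 + u + u ^ 2 / 2`, then `2 * w - 1 = v ^ 2` with `v = 1 + u`, and the parallelogram law
factors `‖v ^ 2 - 1‖ ^ 2 - 2 * ‖v ^ 2‖ - 1` as `(‖v - 1‖ ^ 2 - 1) * (‖v + 1‖ ^ 2 - 1)`. On the right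
half-plane only the first factor can be negative, so the cardioid domain is
`4 * ‖w - 1‖ ^ 2 < 1 + 2 * ‖2 * w - 1‖`. Against the conic condition `k * ‖w - 1‖ < re w` with
`k = 5 / 3` this becomes a quartic inequality in `‖w - 1‖` on `[1 / 2, 3 / 2)`, with equality at
`3 / 2`: there the two boundary curves touch, at `w = 5 / 2`.
-/

theorem sq_norm_sub_one_sub_one_mul_sq_norm_add_one_sub_one (v : ℂ) :
    (‖v - 1‖ ^ 2 - 1) * (‖v + 1‖ ^ 2 - 1) = ‖v ^ 2 - 1‖ ^ 2 - (1 + 2 * ‖v ^ 2‖) := by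
  have parallelogram : ‖v + 1‖ ^ 2 + ‖v - 1‖ ^ 2 = 2 * (‖v‖ ^ 2 + 1) := by
    simpa using parallelogram_law_with_norm ℂ v 1
  have norm_factor : ‖v ^ 2 - 1‖ = ‖v + 1‖ * ‖v - 1‖ := by
    rw [← norm_mul, ← sq_sub_sq, one_pow]
  rw [norm_factor, norm_pow]
  linear_combination -parallelogram

theorem norm_sub_one_lt_one_iff {v : ℂ} (hv : 0 ≤ v.re) :
    ‖v - 1‖ < 1 ↔ ‖v ^ 2 - 1‖ ^ 2 < 1 + 2 * ‖v ^ 2‖ := by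
  rw [← sub_neg (a := ‖v ^ 2 - 1‖ ^ 2), ← sq_norm_sub_one_sub_one_mul_sq_norm_add_one_sub_one]
  constructor
  · intro h
    have one_lt : 1 < ‖v + 1‖ := by
      have two_le : ‖(v + 1) - (v - 1)‖ ≤ ‖v + 1‖ + ‖v - 1‖ := norm_sub_le _ _
      rw [show v + 1 - (v - 1) = 2 by ring, norm_ofNat] at two_le
      linarith
    exact mul_neg_of_neg_of_pos (sub_neg.2 (pow_lt_one₀ (norm_nonneg _) h two_ne_zero))
      (sub_pos.2 (one_lt_pow₀ one_lt two_ne_zero))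
  · intro h
    have one_le : 1 ≤ ‖v + 1‖ := by
      have re_le : (v + 1).re ≤ ‖v + 1‖ := re_le_norm _
      rw [add_re, one_re] at re_le
      linarith
    have sq_lt : ‖v - 1‖ ^ 2 < 1 :=
      sub_neg.1 (neg_of_mul_neg_left h (sub_nonneg.2 (one_le_pow₀ one_le)))
    exact (sq_lt_one_iff₀ (norm_nonneg _)).1 sq_lt

theorem mem_omegaCar_iff_exists_sq {w : ℂ} :
    w ∈ omegaCar ↔ ∃ v : ℂ, ‖v - 1‖ < 1 ∧ v ^ 2 = 2 * w - 1 := by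
  constructor
  · rintro ⟨u, hu, rfl⟩
    exact ⟨1 + u, by simpa using hu, by ring⟩
  · rintro ⟨v, hv, hvw⟩
    exact ⟨v - 1, hv, by linear_combination -hvw / 2⟩

theorem mem_omegaCar_iff {w : ℂ} :
    w ∈ omegaCar ↔ 4 * ‖w - 1‖ ^ 2 < 1 + 2 * ‖2 * w - 1‖ := by
  have norm_sq_sub_one {v : ℂ} (hvw : v ^ 2 = 2 * w - 1) :
      ‖v ^ 2 - 1‖ ^ 2 = 4 * ‖w - 1‖ ^ 2 := by
    rw [hvw, show 2 * w - 1 - 1 = 2 * (w - 1) by ring, norm_mul, norm_ofNat]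
    ring
  rw [mem_omegaCar_iff_exists_sq]
  constructor
  · rintro ⟨v, hv, hvw⟩
    have re_nonneg : 0 ≤ v.re := by
      have re_le : (1 - v).re ≤ ‖1 - v‖ := re_le_norm _
      rw [norm_sub_rev, sub_re, one_re] at re_le
      linarith
    rwa [norm_sub_one_lt_one_iff re_nonneg, norm_sq_sub_one hvw, hvw] at hv
  · intro h
    have hvw : ((2 * w - 1) ^ (2⁻¹ : ℂ)) ^ 2 = 2 * w - 1 := cpow_ofNat_inv_pow _ 2
    have re_nonneg : 0 ≤ ((2 * w - 1) ^ (2⁻¹ : ℂ)).re := by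
      rw [cpow_inv_two_re]
      exact Real.sqrt_nonneg _
    refine ⟨_, ?_, hvw⟩
    rwa [norm_sub_one_lt_one_iff re_nonneg, norm_sq_sub_one hvw, hvw]

/-- The conic domain `Ω_k`: a half-plane for `k = 0`, and the part of the plane cut out by a branch
of a hyperbola for `0 < k < 1`, by a parabola for `k = 1` and by an ellipse for `1 < k`. A
normalized analytic `f` is `k`-starlike when `z * f' z / f z` takes its values in `Ω_k`. -/
def conicDomain (k : ℝ) : Set ℂ := {w : ℂ | k * ‖w - 1‖ < w.re}

theorem conicDomain_antitone : Antitone conicDomain := fun _ _ hkl _ hw =>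
  (mul_le_mul_of_nonneg_right hkl (norm_nonneg _)).trans_lt hw

theorem sq_norm_two_mul_sub_one (w : ℂ) :
    ‖2 * w - 1‖ ^ 2 = 4 * ‖w - 1‖ ^ 2 + 4 * w.re - 3 := by
  simp only [Complex.sq_norm, normSq_apply, sub_re, sub_im, mul_re, mul_im, re_ofNat, im_ofNat,
    one_re, one_im]
  ring

theorem sq_four_mul_sq_sub_one_lt {d : ℝ} (hd : 1 / 2 ≤ d) (hd' : d < 3 / 2) :
    (4 * d ^ 2 - 1) ^ 2 < 4 * (4 * d ^ 2 + 20 / 3 * d - 3) := by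
  have cubic_pos : 0 < 16 * d ^ 3 + 24 * d ^ 2 + 12 * d - 26 / 3 := by
    have : (1 / 2) ^ 3 ≤ d ^ 3 := by gcongr
    have : (1 / 2) ^ 2 ≤ d ^ 2 := by gcongr
    linarith
  have quartic_pos := mul_pos (sub_pos.2 hd') cubic_pos
  linarith

theorem conicDomain_five_thirds_subset_omegaCar : conicDomain (5 / 3) ⊆ omegaCar := by
  intro w (hw : 5 / 3 * ‖w - 1‖ < w.re)
  rw [mem_omegaCar_iff]
  have re_sub_one_le : (w - 1).re ≤ ‖w - 1‖ := re_le_norm _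
  rw [sub_re, one_re] at re_sub_one_le
  have norm_lt : ‖w - 1‖ < 3 / 2 := by linarith
  rcases lt_or_ge ‖w - 1‖ (1 / 2) with h | h
  · have sq_lt : ‖w - 1‖ ^ 2 < (1 / 2) ^ 2 := by gcongr
    linarith [norm_nonneg (2 * w - 1)]
  · have sq_lt : (4 * ‖w - 1‖ ^ 2 - 1) ^ 2 < (2 * ‖2 * w - 1‖) ^ 2 :=
      calc (4 * ‖w - 1‖ ^ 2 - 1) ^ 2
          < 4 * (4 * ‖w - 1‖ ^ 2 + 20 / 3 * ‖w - 1‖ - 3) := sq_four_mul_sq_sub_one_lt h norm_lt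
        _ ≤ 4 * (4 * ‖w - 1‖ ^ 2 + 4 * w.re - 3) := by linarith
        _ = (2 * ‖2 * w - 1‖) ^ 2 := by rw [mul_pow, sq_norm_two_mul_sub_one]; ring
    linarith [lt_of_pow_lt_pow_left₀ 2 (by positivity) sq_lt]

theorem conicDomain_subset_omegaCar {k : ℝ} (hk : 5 / 3 ≤ k) : conicDomain k ⊆ omegaCar :=
  (conicDomain_antitone hk).trans conicDomain_five_thirds_subset_omegaCar

theorem stmt_6 (k : ℝ) (hk : 5 / 3 ≤ k) (f : ℂ → ℂ)
    (hfd : DifferentiableOn ℂ f (Metric.ball (0 : ℂ) 1))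
    (hf0 : f 0 = 0) (hf1 : deriv f 0 = 1)
    (hfne : ∀ z : ℂ, ‖z‖ < 1 → z ≠ 0 → f z ≠ 0)
    (hstar : ∀ z : ℂ, ‖z‖ < 1 → z ≠ 0 →
      k * ‖z * deriv f z / f z - 1‖ < (z * deriv f z / f z).re) :
    SCar f :=
  ⟨hfd, hf0, hf1, hfne, fun z hz hz0 => conicDomain_subset_omegaCar hk (hstar z hz hz0)⟩
end

section
/- Let −1 < B < A ≤ 1 and suppose that either (a) 1 − B² < 2(1 − AB) ≤ 3(1 − B²) and 2A ≤ 1 + B, or (b) 3(1 − B²) ≤ 2(1 − AB) < 5(1 − B²) and 2A ≤ 3 + 5B. If f is analytic on 𝔻 with f(0) = 0, f'(0) = 1, f(z) ≠ 0 on 𝔻 \ {0}, and z f'(z)/f(z) ∈ {(1 + Aw)/(1 + Bw) : w ∈ 𝔻} for every z ∈ 𝔻 \ {0} (i.e. f belongs to the Janowski class S*[A,B]), then f ∈ S*_car. -/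
open Complex Metric

/-!
Since `1 + u + u² / 2 = 1 / 2 + (1 + u)² / 2`, the domain `Ω_car` consists of the points
`1 / 2 + s² / 2` with `|s - 1| < 1`. If `|q - 1| < 1`, that is `|q|² < 2 Re q`, then the square root
`s` of `2 q` with nonnegative real part satisfies `(Re s)² = |q| + Re q > |q|² = |s|⁴ / 4`, that is
`|s - 1| < 1`; hence `Ω_car` contains the disk with diameter `(1 / 2, 5 / 2)`. The image of the unit
disk under `w ↦ (1 + A w) / (1 + B w)` is the disk with diameter
`((1 - A) / (1 - B), (1 + A) / (1 + B))`. The two cases of the theorem say whether its center lies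
to the left or to the right of `3 / 2`, and in each case it is enough to control the endpoint of the
diameter on that side.
-/

section Cardioid

lemma norm_sub_one_lt_one_iff_s10 (z : ℂ) : ‖z - 1‖ < 1 ↔ ‖z‖ ^ 2 < 2 * z.re := by
  have expand : ‖z - 1‖ ^ 2 = ‖z‖ ^ 2 - 2 * z.re + 1 := by
    simp only [← normSq_eq_norm_sq, normSq_sub, map_one, mul_one]
    ring
  rw [← sq_lt_one_iff₀ (norm_nonneg _), expand]
  constructor <;> intro h <;> linarith

lemma exists_sq_eq_two_mul_of_norm_sub_one_lt_one {q : ℂ} (hq : ‖q - 1‖ < 1) :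
    ∃ s : ℂ, ‖s - 1‖ < 1 ∧ s ^ 2 = 2 * q := by
  set s : ℂ := (2 * q) ^ (2⁻¹ : ℂ) with hs
  have sq_s : s ^ 2 = 2 * q := cpow_ofNat_inv_pow _ 2
  have norm_s : ‖s‖ ^ 2 = 2 * ‖q‖ := by rw [← norm_pow, sq_s, norm_mul, norm_ofNat]
  have re_s : s.re = √(‖q‖ + q.re) := by
    rw [hs, cpow_inv_two_re, norm_mul, norm_ofNat, mul_re, re_ofNat, im_ofNat, zero_mul, sub_zero,
      ← mul_add, mul_div_cancel_left₀ _ two_ne_zero]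
  have norm_lt_re : ‖q‖ < s.re := by
    rw [re_s, Real.lt_sqrt (norm_nonneg q)]
    linarith [(norm_sub_one_lt_one_iff_s10 q).1 hq, re_le_norm q]
  exact ⟨s, (norm_sub_one_lt_one_iff_s10 s).2 (by linarith), sq_s⟩

lemma ball_subset_omegaCar : ball (3 / 2 : ℂ) 1 ⊆ omegaCar := by
  intro p hp
  have hq : ‖p - 1 / 2 - 1‖ < 1 := by
    rwa [sub_sub, show (1 / 2 + 1 : ℂ) = 3 / 2 by norm_num, ← mem_ball_iff_norm]
  obtain ⟨s, hs, sq_s⟩ := exists_sq_eq_two_mul_of_norm_sub_one_lt_one hq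
  exact ⟨s - 1, hs, by linear_combination -sq_s / 2⟩

lemma ball_ofReal_subset_omegaCar {a r : ℝ} (hleft : 1 / 2 ≤ a - r) (hright : a + r ≤ 5 / 2) :
    ball (a : ℂ) r ⊆ omegaCar := by
  refine (ball_subset_ball' ?_).trans ball_subset_omegaCar
  have hdist : dist (a : ℂ) (3 / 2) = |a - 3 / 2| := by
    rw [← Real.dist_eq, ← isometry_ofReal.dist_eq]
    norm_num
  rw [hdist, ← le_sub_iff_add_le', abs_le]
  constructor <;> linarith

end Cardioid

section Janowski

open scoped ComplexConjugate

lemma norm_add_conj_lt_norm_one_add_mul {b w : ℂ} (hb : ‖b‖ < 1) (hw : ‖w‖ < 1) :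
    ‖w + conj b‖ < ‖1 + b * w‖ := by
  have identity : ‖1 + b * w‖ ^ 2 - ‖w + conj b‖ ^ 2 = (1 - ‖b‖ ^ 2) * (1 - ‖w‖ ^ 2) := by
    simp only [← normSq_eq_norm_sq, normSq_apply, add_re, add_im, mul_re, mul_im, one_re, one_im,
      conj_re, conj_im]
    ring
  have hpos : 0 < (1 - ‖b‖ ^ 2) * (1 - ‖w‖ ^ 2) :=
    mul_pos (sub_pos.2 ((sq_lt_one_iff₀ (norm_nonneg b)).2 hb))
      (sub_pos.2 ((sq_lt_one_iff₀ (norm_nonneg w)).2 hw))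
  exact lt_of_pow_lt_pow_left₀ 2 (norm_nonneg _) (by linarith)

lemma one_add_mul_div_one_add_mul_mem_ball {a b w : ℂ} (hab : a ≠ b) (hb : ‖b‖ < 1)
    (hw : ‖w‖ < 1) :
    (1 + a * w) / (1 + b * w) ∈
      ball ((1 - a * conj b) / (1 - ‖b‖ ^ 2 : ℝ)) (‖a - b‖ / (1 - ‖b‖ ^ 2)) := by
  have hlt := norm_add_conj_lt_norm_one_add_mul hb hw
  have hden : 0 < ‖1 + b * w‖ := (norm_nonneg _).trans_lt hlt
  have hdelta : 0 < 1 - ‖b‖ ^ 2 := sub_pos.2 ((sq_lt_one_iff₀ (norm_nonneg b)).2 hb)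
  have hsub : (1 + a * w) / (1 + b * w) - (1 - a * conj b) / (1 - ‖b‖ ^ 2 : ℝ) =
      (a - b) / (1 - ‖b‖ ^ 2 : ℝ) * ((w + conj b) / (1 + b * w)) := by
    rw [div_sub_div _ _ (norm_pos_iff.1 hden) (ofReal_ne_zero.2 hdelta.ne'), div_mul_div_comm,
      mul_comm (1 + b * w) (1 - ‖b‖ ^ 2 : ℝ)]
    congr 1
    push_cast
    rw [← mul_conj']
    ring
  rw [mem_ball_iff_norm, hsub, norm_mul, norm_div, norm_div, Complex.norm_of_nonneg hdelta.le]
  exact mul_lt_of_lt_one_right (div_pos (norm_pos_iff.2 (sub_ne_zero.2 hab)) hdelta)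
    ((div_lt_one hden).2 hlt)

/-- The center of the disk onto which `w ↦ (1 + A w) / (1 + B w)` maps the unit disk, for real
parameters with `|B| < 1`. -/
noncomputable def janowskiCenter (A B : ℝ) : ℝ := (1 - A * B) / (1 - B ^ 2)

/-- The radius of the disk onto which `w ↦ (1 + A w) / (1 + B w)` maps the unit disk, for real
parameters with `|B| < 1` and `B < A`. -/
noncomputable def janowskiRadius (A B : ℝ) : ℝ := (A - B) / (1 - B ^ 2)

variable {A B : ℝ}

lemma mem_ball_janowskiCenter (hBA : B < A) (hB : |B| < 1) {w : ℂ} (hw : ‖w‖ < 1) :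
    (1 + (A : ℂ) * w) / (1 + (B : ℂ) * w) ∈ ball (janowskiCenter A B : ℂ) (janowskiRadius A B) := by
  have h := one_add_mul_div_one_add_mul_mem_ball (a := A) (b := B) (ofReal_injective.ne hBA.ne')
    (by rwa [norm_real, Real.norm_eq_abs]) hw
  rw [conj_ofReal, ← ofReal_sub, norm_real, norm_real, Real.norm_eq_abs, Real.norm_eq_abs, sq_abs,
    abs_of_pos (sub_pos.2 hBA)] at h
  simpa only [janowskiCenter, janowskiRadius, ofReal_div, ofReal_sub, ofReal_mul, ofReal_one]
    using h

lemma janowskiCenter_sub_janowskiRadius (hB : |B| < 1) :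
    janowskiCenter A B - janowskiRadius A B = (1 - A) / (1 - B) := by
  have hplus : 1 + B ≠ 0 := by linarith [(abs_lt.1 hB).1]
  rw [janowskiCenter, janowskiRadius, ← sub_div, ← mul_div_mul_right (1 - A) (1 - B) hplus]
  ring

lemma janowskiCenter_add_janowskiRadius (hB : |B| < 1) :
    janowskiCenter A B + janowskiRadius A B = (1 + A) / (1 + B) := by
  have hminus : 1 - B ≠ 0 := by linarith [(abs_lt.1 hB).2]
  rw [janowskiCenter, janowskiRadius, ← add_div, ← mul_div_mul_right (1 + A) (1 + B) hminus]
  ring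

end Janowski

theorem stmt_10 (A B : ℝ) (hB : -1 < B) (hBA : B < A) (hA : A ≤ 1)
    (hcond : (1 - B ^ 2 < 2 * (1 - A * B) ∧ 2 * (1 - A * B) ≤ 3 * (1 - B ^ 2) ∧
        2 * A ≤ 1 + B) ∨
      (3 * (1 - B ^ 2) ≤ 2 * (1 - A * B) ∧ 2 * (1 - A * B) < 5 * (1 - B ^ 2) ∧
        2 * A ≤ 3 + 5 * B))
    (f : ℂ → ℂ)
    (hfd : DifferentiableOn ℂ f (Metric.ball (0 : ℂ) 1))
    (hf0 : f 0 = 0) (hf1 : deriv f 0 = 1)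
    (hfne : ∀ z : ℂ, ‖z‖ < 1 → z ≠ 0 → f z ≠ 0)
    (hsub : ∀ z : ℂ, ‖z‖ < 1 → z ≠ 0 → ∃ w : ℂ, ‖w‖ < 1 ∧
      z * deriv f z / f z = (1 + (A : ℂ) * w) / (1 + (B : ℂ) * w)) :
    SCar f := by
  have hB1 : B < 1 := hBA.trans_le hA
  have habs : |B| < 1 := abs_lt.2 ⟨hB, hB1⟩
  have hpos : 0 < 1 - B ^ 2 := sub_pos.2 ((sq_lt_one_iff_abs_lt_one B).2 habs)
  have hends : 1 / 2 ≤ janowskiCenter A B - janowskiRadius A B ∧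
      janowskiCenter A B + janowskiRadius A B ≤ 5 / 2 := by
    rcases hcond with ⟨-, hcenter, hA_le⟩ | ⟨hcenter, -, hA_le⟩
    · have hcenter_le : janowskiCenter A B ≤ 3 / 2 := (div_le_iff₀ hpos).2 (by linarith)
      have hleft : 1 / 2 ≤ janowskiCenter A B - janowskiRadius A B := by
        rw [janowskiCenter_sub_janowskiRadius habs, le_div_iff₀ (by linarith)]
        linarith
      exact ⟨hleft, by linarith⟩
    · have hle_center : 3 / 2 ≤ janowskiCenter A B := (le_div_iff₀ hpos).2 (by linarith)
      have hright : janowskiCenter A B + janowskiRadius A B ≤ 5 / 2 := by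
        rw [janowskiCenter_add_janowskiRadius habs, div_le_iff₀ (by linarith)]
        linarith
      exact ⟨by linarith, hright⟩
  refine ⟨hfd, hf0, hf1, hfne, fun z hz hz0 => ?_⟩
  obtain ⟨w, hw, hzw⟩ := hsub z hz hz0
  rw [hzw]
  exact ball_ofReal_subset_omegaCar hends.1 hends.2 (mem_ball_janowskiCenter hBA habs hw)
end
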